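/- Let γ, δ₀ and the test measures be as in the planar curve setup, and write x₀ = γ(0) and R = R(0). Then there exist constants C > 0 and δ₁ ∈ (0, δ₀] such that for all δ ∈ (0, δ₁] and all σ, ε > 0 with max(σ, ε) ≤ δ/4, writing y = γ(δ), one has | W₁(μ_{x₀}^{σ,ε}, μ_y^{σ,ε}) − ‖x₀ − y‖·(1 − ε²/(6R²) + σ²/(3R²)) | ≤ C·δ⁴. -/

import Mathlib

open MeasureTheory Set

/-- The 1-Wasserstein distance: infimum over couplings of the integral of the distance. -/
noncomputable def W1 {X : Type*} [MeasurableSpace X] [PseudoMetricSpace X]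
    (μ ν : Measure X) : ℝ :=
  sInf { c : ℝ | ∃ π : Measure (X × X), IsProbabilityMeasure π ∧
      π.map Prod.fst = μ ∧ π.map Prod.snd = ν ∧ c = ∫ p, dist p.1 p.2 ∂π }

/-- Restriction of the ambient volume measure to a set, normalized to a probability measure. -/
noncomputable def normRestrict {X : Type*} [MeasureSpace X] (s : Set X) : Measure X :=
  (volume s)⁻¹ • volume.restrict s

/-!
In Fermi coordinates `(a, β)` along a curve of curvature `κ` the area element is `(1 - κ β) da dβ`.
Replacing the height `β` by the area `v` it cuts off turns the normalized restrictions around `γ 0`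
and `γ δ` into images of one rectangle under one chart `Φ`: the first through `(a, v) ↦ Φ (a, v)`,
the second through its reflection `(a, v) ↦ Φ (δ - a, v)`. The reflection is a transport plan whose
displacements are chords centred at the parameter `δ / 2`, and up to `O(δ⁴)` the length of each such
chord equals its component along the tangent at `δ / 2`. The linear function dual to that tangent is
1-Lipschitz, so the plan is optimal up to `O(δ⁴)`, and the distance is the mean chord length. That
mean is computed from the Taylor expansion at `δ / 2`, where every even-order term cancels.
-/

open Filter Topology Asymptotics
open scoped RealInnerProductSpace
local notation "ℝ²" => EuclideanSpace ℝ (Fin 2)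

section Wasserstein

theorem W1_map_le {Ω X : Type*} [MeasurableSpace Ω] [MeasurableSpace X] [PseudoMetricSpace X]
    [OpensMeasurableSpace X] [SecondCountableTopology X] {ρ : Measure Ω} [IsProbabilityMeasure ρ]
    {f g : Ω → X} (hf : Measurable f) (hg : Measurable g) :
    W1 (ρ.map f) (ρ.map g) ≤ ∫ x, dist (f x) (g x) ∂ρ := by
  have hfg : Measurable fun x => (f x, g x) := hf.prodMk hg
  refine csInf_le ⟨0, ?_⟩ ⟨ρ.map fun x => (f x, g x),
    Measure.isProbabilityMeasure_map hfg.aemeasurable, Measure.map_map measurable_fst hfg,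
    Measure.map_map measurable_snd hfg, ?_⟩
  · rintro _ ⟨π, -, -, -, rfl⟩
    exact integral_nonneg fun _ => dist_nonneg
  · rw [integral_map hfg.aemeasurable continuous_dist.stronglyMeasurable.aestronglyMeasurable]

theorem integral_sub_integral_le_W1 {X : Type*} [MeasurableSpace X] [PseudoMetricSpace X]
    [OpensMeasurableSpace X] [SecondCountableTopology X] {μ ν : Measure X}
    [IsProbabilityMeasure μ] [IsProbabilityMeasure ν] {u : X → ℝ} (hu : LipschitzWith 1 u) {z : X}
    (hμ : Integrable (fun x => dist x z) μ) (hν : Integrable (fun x => dist x z) ν) :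
    ∫ x, u x ∂ν - ∫ x, u x ∂μ ≤ W1 μ ν := by
  have hu_int : ∀ {κ : Measure X} [IsProbabilityMeasure κ],
      Integrable (fun x => dist x z) κ → Integrable u κ := fun hκ =>
    ((integrable_const |u z|).add hκ).mono' hu.continuous.stronglyMeasurable.aestronglyMeasurable <|
      .of_forall fun x => by
        have hxz := hu.dist_le_mul x z
        rw [NNReal.coe_one, one_mul, Real.dist_eq] at hxz
        rw [Real.norm_eq_abs, Pi.add_apply]
        linarith [abs_sub_abs_le_abs_sub (u x) (u z)]
  refine le_csInf ⟨_, μ.prod ν, inferInstance, by simp, by simp, rfl⟩ ?_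
  rintro _ ⟨π, _, rfl, rfl, rfl⟩
  have hfst : Integrable (fun p : X × X => u p.1) π := (hu_int hμ).comp_measurable measurable_fst
  have hsnd : Integrable (fun p : X × X => u p.2) π := (hu_int hν).comp_measurable measurable_snd
  have hdist : Integrable (fun p : X × X => dist p.1 p.2) π :=
    ((hμ.comp_measurable measurable_fst).add (hν.comp_measurable measurable_snd)).mono'
      continuous_dist.stronglyMeasurable.aestronglyMeasurable <| .of_forall fun p => by
        rw [Real.norm_of_nonneg dist_nonneg]
        exact dist_triangle_right p.1 p.2 z
  have hu_meas := hu.continuous.stronglyMeasurable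
  rw [integral_map measurable_fst.aemeasurable hu_meas.aestronglyMeasurable,
    integral_map measurable_snd.aemeasurable hu_meas.aestronglyMeasurable,
    ← integral_sub hsnd hfst]
  refine integral_mono (hsnd.sub hfst) hdist fun p => ?_
  calc u p.2 - u p.1 ≤ dist (u p.2) (u p.1) := le_abs_self _
    _ ≤ dist p.2 p.1 := by simpa using hu.dist_le_mul p.2 p.1
    _ = dist p.1 p.2 := dist_comm _ _

theorem abs_W1_map_sub_integral_le {Ω E : Type*} [MeasurableSpace Ω] [NormedAddCommGroup E]
    [InnerProductSpace ℝ E] [MeasurableSpace E] [BorelSpace E] [SecondCountableTopology E]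
    {ρ : Measure Ω} [IsProbabilityMeasure ρ] {f g : Ω → E} (hf : Measurable f) (hg : Measurable g)
    (hfρ : Integrable f ρ) (hgρ : Integrable g ρ) {e : E} (he : ‖e‖ ≤ 1) {P : Ω → ℝ}
    (hP : Integrable P ρ) {c : ℝ} (hle_inner : ∀ᵐ x ∂ρ, P x - c ≤ ⟪g x - f x, e⟫)
    (hnorm_le : ∀ᵐ x ∂ρ, ‖g x - f x‖ ≤ P x + c) :
    |W1 (ρ.map f) (ρ.map g) - ∫ x, P x ∂ρ| ≤ c := by
  have hupper : W1 (ρ.map f) (ρ.map g) ≤ ∫ x, P x ∂ρ + c :=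
    calc W1 (ρ.map f) (ρ.map g) ≤ ∫ x, ‖g x - f x‖ ∂ρ := by
          simpa only [dist_eq_norm, norm_sub_rev] using W1_map_le hf hg
      _ ≤ ∫ x, (P x + c) ∂ρ :=
          integral_mono_ae (hgρ.sub hfρ).norm (hP.add (integrable_const c)) hnorm_le
      _ = ∫ x, P x ∂ρ + c := by rw [integral_add hP (integrable_const c)]; simp
  have hlip : LipschitzWith 1 fun z : E => ⟪z, e⟫ := .of_dist_le_mul fun z w => by
    rw [Real.dist_eq, ← inner_sub_left, dist_eq_norm, NNReal.coe_one, one_mul]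
    exact (abs_real_inner_le_norm _ _).trans (mul_le_of_le_one_right (norm_nonneg _) he)
  have hdist : ∀ {k : Ω → E}, Measurable k → Integrable k ρ →
      Integrable (fun z => dist z 0) (ρ.map k) := fun hk hkρ =>
    (integrable_map_measure (by fun_prop) hk.aemeasurable).2 <| by
      simpa only [Function.comp_def, dist_zero_right] using hkρ.norm
  have : IsProbabilityMeasure (ρ.map f) := Measure.isProbabilityMeasure_map hf.aemeasurable
  have : IsProbabilityMeasure (ρ.map g) := Measure.isProbabilityMeasure_map hg.aemeasurable
  have hlower : ∫ x, P x ∂ρ - c ≤ W1 (ρ.map f) (ρ.map g) :=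
    calc ∫ x, P x ∂ρ - c = ∫ x, (P x - c) ∂ρ := by rw [integral_sub hP (integrable_const c)]; simp
      _ ≤ ∫ x, ⟪g x - f x, e⟫ ∂ρ := integral_mono_ae (hP.sub (integrable_const c))
          ((hgρ.sub hfρ).inner_const e) hle_inner
      _ = ∫ z, ⟪z, e⟫ ∂(ρ.map g) - ∫ z, ⟪z, e⟫ ∂(ρ.map f) := by
          rw [integral_map hg.aemeasurable (by fun_prop),
            integral_map hf.aemeasurable (by fun_prop),
            ← integral_sub (hgρ.inner_const e) (hfρ.inner_const e)]
          simp only [inner_sub_left]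
      _ ≤ W1 (ρ.map f) (ρ.map g) :=
          integral_sub_integral_le_W1 hlip (hdist hf hfρ) (hdist hg hgρ)
  exact abs_le.2 ⟨by linarith, by linarith⟩

end Wasserstein

section NormRestrict

theorem normRestrict_eq_map {X Y : Type*} [MeasureSpace X] [MeasureSpace Y] {f : X → Y}
    (hf : Measurable f) {s : Set X} {t : Set Y}
    (h : (volume.restrict s).map f = volume.restrict t) :
    normRestrict t = (normRestrict s).map f := by
  have hvol : volume t = volume s := by
    rw [← Measure.restrict_apply_univ, ← h, Measure.map_apply hf .univ, preimage_univ,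
      Measure.restrict_apply_univ]
  rw [normRestrict, normRestrict, Measure.map_smul, h, hvol]

theorem isProbabilityMeasure_normRestrict {X : Type*} [MeasureSpace X] {s : Set X}
    (hs₀ : volume s ≠ 0) (hs : volume s ≠ ⊤) : IsProbabilityMeasure (normRestrict s) :=
  ⟨by rw [normRestrict, Measure.smul_apply, Measure.restrict_apply_univ, smul_eq_mul,
    ENNReal.inv_mul_cancel hs₀ hs]⟩

theorem normRestrict_const_sub_preimage (δ : ℝ) {s t : Set ℝ} (hs : MeasurableSet s)
    (ht : MeasurableSet t) :
    normRestrict (s ×ˢ t) =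
      (normRestrict (((δ - ·) ⁻¹' s) ×ˢ t)).map (Prod.map (δ - ·) id) := by
  have hmp : MeasurePreserving (Prod.map (δ - ·) id : ℝ × ℝ → ℝ × ℝ) :=
    (Measure.measurePreserving_sub_left volume δ).prod (.id volume)
  exact normRestrict_eq_map hmp.measurable (hmp.restrict_preimage (hs.prod ht)).map_eq

theorem integrableOn_of_continuous_of_isBounded {X F : Type*} [MetricSpace X] [ProperSpace X]
    [MeasurableSpace X] [OpensMeasurableSpace X] {μ : Measure X} [IsFiniteMeasureOnCompacts μ]
    [NormedAddCommGroup F] {f : X → F} (hf : Continuous f) {s : Set X}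
    (hs : Bornology.IsBounded s) : IntegrableOn f s μ :=
  (hf.continuousOn.integrableOn_compact hs.isCompact_closure).mono_set subset_closure

theorem integrable_normRestrict {X F : Type*} [MetricSpace X] [ProperSpace X] [MeasureSpace X]
    [OpensMeasurableSpace X] [IsFiniteMeasureOnCompacts (volume : Measure X)]
    [NormedAddCommGroup F] {f : X → F} (hf : Continuous f) {s : Set X} (hs₀ : volume s ≠ 0)
    (hs : Bornology.IsBounded s) : Integrable f (normRestrict s) :=
  (integrableOn_of_continuous_of_isBounded hf hs).smul_measure (ENNReal.inv_ne_top.2 hs₀)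

theorem ae_mem_normRestrict {X : Type*} [MeasureSpace X] {s : Set X} (hs : MeasurableSet s) :
    ∀ᵐ x ∂normRestrict s, x ∈ s :=
  Measure.ae_smul_measure (ae_restrict_mem hs) _

end NormRestrict

section Frame

/-- Rotation of the plane by a right angle, anticlockwise. -/
noncomputable def quarterTurn : ℝ² →L[ℝ] ℝ² :=
  LinearMap.toContinuousLinearMap
    { toFun := fun v => !₂[-v 1, v 0]
      map_add' := fun v w => by ext i; fin_cases i <;> simp [add_comm]
      map_smul' := fun c v => by ext i; fin_cases i <;> simp }

theorem quarterTurn_apply_zero (v : ℝ²) : quarterTurn v 0 = -v 1 := rfl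

theorem quarterTurn_apply_one (v : ℝ²) : quarterTurn v 1 = v 0 := rfl

theorem inner_eq_coord (v w : ℝ²) : ⟪v, w⟫ = v 0 * w 0 + v 1 * w 1 := by
  simp [PiLp.inner_apply, Fin.sum_univ_two, mul_comm]

theorem quarterTurn_quarterTurn (v : ℝ²) : quarterTurn (quarterTurn v) = -v := by
  ext i
  fin_cases i <;> simp [quarterTurn_apply_zero, quarterTurn_apply_one]

theorem inner_quarterTurn_self (v : ℝ²) : ⟪quarterTurn v, v⟫ = 0 := by
  rw [inner_eq_coord, quarterTurn_apply_zero, quarterTurn_apply_one]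
  ring

theorem norm_quarterTurn (v : ℝ²) : ‖quarterTurn v‖ = ‖v‖ := by
  simp [EuclideanSpace.norm_eq, quarterTurn_apply_zero, quarterTurn_apply_one, add_comm]

theorem sq_add_sq_of_norm_eq_one {v : ℝ²} (hv : ‖v‖ = 1) : v 0 ^ 2 + v 1 ^ 2 = 1 := by
  rw [← Fin.sum_univ_two fun i => v i ^ 2, ← EuclideanSpace.real_norm_sq_eq, hv, one_pow]

theorem inner_smul_add_inner_quarterTurn_smul {v : ℝ²} (hv : ‖v‖ = 1) (w : ℝ²) :
    ⟪w, v⟫ • v + ⟪w, quarterTurn v⟫ • quarterTurn v = w := by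
  have hv' := sq_add_sq_of_norm_eq_one hv
  ext i
  fin_cases i <;> simp only [Fin.zero_eta, Fin.mk_one, PiLp.add_apply, PiLp.smul_apply, smul_eq_mul,
    inner_eq_coord, quarterTurn_apply_zero, quarterTurn_apply_one]
  · linear_combination w 0 * hv'
  · linear_combination w 1 * hv'

theorem eq_quarterTurn_or_eq_neg {v w : ℝ²} (hv : ‖v‖ = 1) (hw : ‖w‖ = 1) (hwv : ⟪w, v⟫ = 0) :
    w = quarterTurn v ∨ w = -quarterTurn v := by
  have hw_eq := inner_smul_add_inner_quarterTurn_smul hv w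
  rw [hwv, zero_smul, zero_add] at hw_eq
  have habs : |⟪w, quarterTurn v⟫| = 1 := by
    rw [← hw, ← hw_eq, norm_smul, norm_quarterTurn, hv, hw_eq, Real.norm_eq_abs, mul_one]
  rcases eq_or_eq_neg_of_abs_eq habs with h | h <;> rw [h] at hw_eq
  · exact .inl (by rw [← hw_eq, one_smul])
  · exact .inr (by rw [← hw_eq, neg_one_smul])

theorem inner_deriv_self_eq_zero {F : Type*} [NormedAddCommGroup F] [InnerProductSpace ℝ F]
    {f : ℝ → F} {a c : ℝ} (hf : DifferentiableAt ℝ f a) (hc : ∀ t, ‖f t‖ = c) :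
    ⟪deriv f a, f a⟫ = 0 := by
  have hderiv : HasDerivAt (fun t => ⟪f t, f t⟫) (⟪f a, deriv f a⟫ + ⟪deriv f a, f a⟫) a :=
    hf.hasDerivAt.inner ℝ hf.hasDerivAt
  simp only [real_inner_self_eq_norm_sq, hc] at hderiv
  have := hderiv.unique (hasDerivAt_const a (c ^ 2))
  rw [real_inner_comm] at this
  linarith

/-- The curvature of a unit-speed plane curve, signed so as to be positive on left turns. -/
noncomputable def signedCurvature (γ : ℝ → ℝ²) (a : ℝ) : ℝ :=
  ⟪deriv (deriv γ) a, quarterTurn (deriv γ a)⟫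

variable {γ : ℝ → ℝ²} {a : ℝ}

theorem deriv_deriv_eq_signedCurvature_smul (hγ : DifferentiableAt ℝ (deriv γ) a)
    (hunit : ∀ t, ‖deriv γ t‖ = 1) :
    deriv (deriv γ) a = signedCurvature γ a • quarterTurn (deriv γ a) := by
  have h := inner_smul_add_inner_quarterTurn_smul (hunit a) (deriv (deriv γ) a)
  rw [inner_deriv_self_eq_zero hγ hunit, zero_smul, zero_add] at h
  exact h.symm

theorem unit_normal_of_deriv_deriv_ne_zero (hγ : DifferentiableAt ℝ (deriv γ) a)
    (hunit : ∀ t, ‖deriv γ t‖ = 1) (hcurv : deriv (deriv γ) a ≠ 0) :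
    ‖‖deriv (deriv γ) a‖⁻¹ • deriv (deriv γ) a‖ = 1 ∧
      ⟪‖deriv (deriv γ) a‖⁻¹ • deriv (deriv γ) a, deriv γ a⟫ = 0 := by
  rw [real_inner_smul_left, inner_deriv_self_eq_zero hγ hunit, mul_zero]
  exact ⟨norm_smul_inv_norm (𝕜 := ℝ) hcurv, rfl⟩

theorem abs_signedCurvature (hγ : DifferentiableAt ℝ (deriv γ) a)
    (hunit : ∀ t, ‖deriv γ t‖ = 1) : |signedCurvature γ a| = ‖deriv (deriv γ) a‖ := by
  rw [deriv_deriv_eq_signedCurvature_smul hγ hunit, norm_smul, norm_quarterTurn, hunit, mul_one,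
    Real.norm_eq_abs]

theorem quarterTurn_deriv_deriv (hγ : DifferentiableAt ℝ (deriv γ) a)
    (hunit : ∀ t, ‖deriv γ t‖ = 1) :
    quarterTurn (deriv (deriv γ) a) = -(signedCurvature γ a • deriv γ a) := by
  conv_lhs => rw [deriv_deriv_eq_signedCurvature_smul hγ hunit]
  rw [map_smul, quarterTurn_quarterTurn, smul_neg]

theorem hasDerivAt_quarterTurn_deriv (hγ : DifferentiableAt ℝ (deriv γ) a)
    (hunit : ∀ t, ‖deriv γ t‖ = 1) :
    HasDerivAt (fun t => quarterTurn (deriv γ t)) (-(signedCurvature γ a • deriv γ a)) a :=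
  quarterTurn_deriv_deriv hγ hunit ▸
    quarterTurn.hasFDerivAt.comp_hasDerivAt a hγ.hasDerivAt

theorem inner_deriv_deriv_deriv_deriv (hγ : ContDiff ℝ 3 γ) (hunit : ∀ t, ‖deriv γ t‖ = 1) :
    ⟪deriv (deriv (deriv γ)) a, deriv γ a⟫ = -signedCurvature γ a ^ 2 := by
  have hγ₁ : ContDiff ℝ 2 (deriv γ) := hγ.deriv'
  have hγ₂ : ContDiff ℝ 1 (deriv (deriv γ)) := hγ₁.deriv'
  have hdiff₁ := hγ₁.differentiable (by norm_num)
  have hderiv : HasDerivAt (fun t => ⟪deriv (deriv γ) t, deriv γ t⟫) _ a :=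
    (hγ₂.differentiable one_ne_zero a).hasDerivAt.inner ℝ (hdiff₁ a).hasDerivAt
  simp only [inner_deriv_self_eq_zero (hdiff₁ _) hunit] at hderiv
  have := hderiv.unique (hasDerivAt_const a 0)
  rw [real_inner_self_eq_norm_sq, ← abs_signedCurvature (hdiff₁ a) hunit, sq_abs] at this
  linarith

theorem contDiff_signedCurvature {k : WithTop ℕ∞} (hγ : ContDiff ℝ (k + 2) γ) :
    ContDiff ℝ k (signedCurvature γ) := by
  have hγ₁ : ContDiff ℝ (k + 1) (deriv γ) := by
    refine ContDiff.deriv' ?_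
    rwa [add_assoc, one_add_one_eq_two]
  exact hγ₁.deriv'.inner ℝ (quarterTurn.contDiff.comp (hγ₁.of_le le_self_add))

theorem continuous_signedCurvature (hγ : ContDiff ℝ 2 γ) : Continuous (signedCurvature γ) :=
  (contDiff_signedCurvature (k := 0) (by simpa using hγ)).continuous

end Frame

section AreaCoordinate

/-- The signed area per unit length cut off at height `β` in a strip of half-width `σ` around a
curve of curvature `k`, whose area element is `1 - k β`; the constant of integration makes `σ` and
`-σ` fixed points. -/
noncomputable def areaHeight (σ k β : ℝ) : ℝ :=
  β - k * (β ^ 2 - σ ^ 2) / 2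

/-- The inverse of `areaHeight σ k`. This root of the quadratic equation is written with a
rationalized numerator, which makes it valid at `k = 0` as well. -/
noncomputable def areaHeightInv (σ k v : ℝ) : ℝ :=
  (2 * v - k * σ ^ 2) / (1 + √(1 + k ^ 2 * σ ^ 2 - 2 * k * v))

variable {σ k : ℝ}

theorem areaHeightInv_areaHeight {β : ℝ} (h : k * β ≤ 1) :
    areaHeightInv σ k (areaHeight σ k β) = β := by
  have hsqrt : √(1 + k ^ 2 * σ ^ 2 - 2 * k * areaHeight σ k β) = 1 - k * β := by
    rw [← Real.sqrt_sq (sub_nonneg.2 h), areaHeight]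
    ring_nf
  rw [areaHeightInv, hsqrt, div_eq_iff (by linarith), areaHeight]
  ring

theorem continuous_areaHeightInv : Continuous fun p : ℝ × ℝ => areaHeightInv σ p.1 p.2 := by
  unfold areaHeightInv
  exact .div (by fun_prop) (by fun_prop) fun p => by positivity

theorem mul_lt_one_of_mem_Ioo {β : ℝ} (hk : |k| * σ < 1) (hβ : β ∈ Ioo (-σ) σ) : k * β < 1 :=
  calc k * β ≤ |k| * |β| := by rw [← abs_mul]; exact le_abs_self _
    _ ≤ |k| * σ := by gcongr; exact (abs_lt.2 hβ).le
    _ < 1 := hk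

theorem leftInvOn_areaHeightInv (hk : |k| * σ < 1) :
    LeftInvOn (areaHeightInv σ k) (areaHeight σ k) (Ioo (-σ) σ) := fun _ hβ =>
  areaHeightInv_areaHeight (mul_lt_one_of_mem_Ioo hk hβ).le

theorem mapsTo_areaHeight (hk : |k| * σ < 1) :
    MapsTo (areaHeight σ k) (Ioo (-σ) σ) (Ioo (-σ) σ) := by
  intro β hβ
  have hσ : σ ∈ Icc (-σ) σ := ⟨by linarith [hβ.1, hβ.2], le_rfl⟩
  obtain ⟨hlow, hhigh⟩ := abs_le.1 (show |k * σ| ≤ 1 by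
    rw [abs_mul, abs_of_nonneg (by linarith [hσ.1] : 0 ≤ σ)]; exact hk.le)
  have hkβ := mul_lt_one_of_mem_Ioo hk hβ
  have hupper : σ - areaHeight σ k β = (σ - β) * (1 - k * (β + σ) / 2) := by
    rw [areaHeight]; ring
  have hlower : areaHeight σ k β + σ = (β + σ) * (1 - k * (β - σ) / 2) := by
    rw [areaHeight]; ring
  constructor
  · linarith [hlower, mul_pos (by linarith [hβ.1] : 0 < β + σ)
      (by linarith : 0 < 1 - k * (β - σ) / 2)]
  · linarith [hupper, mul_pos (by linarith [hβ.2] : 0 < σ - β)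
      (by linarith : 0 < 1 - k * (β + σ) / 2)]

theorem image_areaHeight (hσ : 0 < σ) (hk : |k| * σ < 1) :
    areaHeight σ k '' Ioo (-σ) σ = Ioo (-σ) σ := by
  refine (mapsTo_areaHeight hk).image_subset.antisymm ?_
  have hcont : ContinuousOn (areaHeight σ k) (Icc (-σ) σ) := by unfold areaHeight; fun_prop
  simpa [areaHeight] using intermediate_value_Ioo (by linarith) hcont

theorem rightInvOn_areaHeightInv (hσ : 0 < σ) (hk : |k| * σ < 1) :
    RightInvOn (areaHeightInv σ k) (areaHeight σ k) (Ioo (-σ) σ) := by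
  have h := (leftInvOn_areaHeightInv hk).rightInvOn_image
  rwa [image_areaHeight hσ hk] at h

theorem mapsTo_areaHeightInv (hσ : 0 < σ) (hk : |k| * σ < 1) :
    MapsTo (areaHeightInv σ k) (Ioo (-σ) σ) (Ioo (-σ) σ) := by
  intro v hv
  rw [← image_areaHeight hσ hk] at hv
  obtain ⟨β, hβ, rfl⟩ := hv
  rwa [leftInvOn_areaHeightInv hk hβ]

end AreaCoordinate

section EqualAreaChart

open ContinuousLinearMap in
theorem det_prod_linear_combinations (a b c d : ℝ) :
    ((a • fst ℝ ℝ ℝ + b • snd ℝ ℝ ℝ).prod (c • fst ℝ ℝ ℝ + d • snd ℝ ℝ ℝ)).det =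
      a * d - b * c := by
  rw [← Matrix.toLin_finTwoProd_toContinuousLinearMap, LinearMap.det_toContinuousLinearMap,
    LinearMap.det_toLin, Matrix.det_fin_two_of]

/-- The Fermi chart of a plane curve, with the normal obtained by turning the velocity to the
left. -/
noncomputable def fermiChart (γ : ℝ → ℝ²) (p : ℝ × ℝ) : ℝ² :=
  γ p.1 + p.2 • quarterTurn (deriv γ p.1)

variable {γ : ℝ → ℝ²}

open ContinuousLinearMap in
theorem hasFDerivAt_fermiChart {p : ℝ × ℝ} (hγ : DifferentiableAt ℝ γ p.1)
    (hγ' : DifferentiableAt ℝ (deriv γ) p.1) (hunit : ∀ t, ‖deriv γ t‖ = 1) :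
    HasFDerivAt (fermiChart γ)
      ((fst ℝ ℝ ℝ).smulRight ((1 - signedCurvature γ p.1 * p.2) • deriv γ p.1) +
        (snd ℝ ℝ ℝ).smulRight (quarterTurn (deriv γ p.1))) p := by
  have hfst : HasFDerivAt Prod.fst (fst ℝ ℝ ℝ) p := hasFDerivAt_fst
  have hsnd : HasFDerivAt Prod.snd (snd ℝ ℝ ℝ) p := hasFDerivAt_snd
  have hnormal := (hasDerivAt_quarterTurn_deriv hγ' hunit).hasFDerivAt.comp p hfst
  refine ((hγ.hasDerivAt.hasFDerivAt.comp p hfst).add (hsnd.smul hnormal)).congr_fderiv ?_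
  refine ContinuousLinearMap.ext fun q => ?_
  simp only [Function.comp_apply, add_apply, comp_apply, coe_fst', toSpanSingleton_apply,
    smul_apply, smul_neg, smulRight_apply, coe_snd']
  module

theorem contDiff_fermiChart {k : WithTop ℕ∞} (hγ : ContDiff ℝ (k + 1) γ) :
    ContDiff ℝ k (fermiChart γ) := by
  have hγ₁ : ContDiff ℝ k (deriv γ) := hγ.deriv'
  have hγ₀ : ContDiff ℝ k γ := hγ.of_le le_self_add
  exact (hγ₀.comp contDiff_fst).add
    (contDiff_snd.smul (quarterTurn.contDiff.comp (hγ₁.comp contDiff_fst)))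

/-- The coordinates of the plane, as a measurable equivalence. -/
noncomputable def coordEquiv : ℝ² ≃ᵐ ℝ × ℝ :=
  (MeasurableEquiv.toLp 2 (Fin 2 → ℝ)).symm.trans MeasurableEquiv.finTwoArrow

theorem measurePreserving_coordEquiv : MeasurePreserving coordEquiv :=
  (volume_preserving_finTwoArrow ℝ).comp
    (EuclideanSpace.volume_preserving_symm_measurableEquiv_toLp (Fin 2))

open ContinuousLinearMap in
theorem exists_hasFDerivAt_coordEquiv_comp_fermiChart {p : ℝ × ℝ} (hγ : DifferentiableAt ℝ γ p.1)
    (hγ' : DifferentiableAt ℝ (deriv γ) p.1) (hunit : ∀ t, ‖deriv γ t‖ = 1) :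
    ∃ D : ℝ × ℝ →L[ℝ] ℝ × ℝ, HasFDerivAt (coordEquiv ∘ fermiChart γ) D p ∧
      D.det = 1 - signedCurvature γ p.1 * p.2 := by
  have hchart := hasFDerivAt_fermiChart hγ hγ' hunit
  refine ⟨_, (((EuclideanSpace.proj 0).hasFDerivAt.comp p hchart).prodMk
    ((EuclideanSpace.proj 1).hasFDerivAt.comp p hchart)).congr_fderiv ?_,
    (det_prod_linear_combinations ((1 - signedCurvature γ p.1 * p.2) * deriv γ p.1 0)
      (quarterTurn (deriv γ p.1) 0) ((1 - signedCurvature γ p.1 * p.2) * deriv γ p.1 1)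
      (quarterTurn (deriv γ p.1) 1)).trans ?_⟩
  · refine ContinuousLinearMap.ext fun q => ?_
    simp [mul_comm]
  · rw [quarterTurn_apply_zero, quarterTurn_apply_one]
    linear_combination (1 - signedCurvature γ p.1 * p.2) * sq_add_sq_of_norm_eq_one (hunit p.1)

theorem map_fermiChart_withDensity (hγ : ContDiff ℝ 2 γ) (hunit : ∀ t, ‖deriv γ t‖ = 1)
    {s : Set (ℝ × ℝ)} (hs : MeasurableSet s) (hinj : InjOn (fermiChart γ) s) :
    ((volume.restrict s).withDensity fun p =>
        ENNReal.ofReal |1 - signedCurvature γ p.1 * p.2|).map (fermiChart γ) =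
      volume.restrict (fermiChart γ '' s) := by
  have hγ' : ContDiff ℝ 1 (deriv γ) := hγ.deriv'
  choose D hD hdet using fun p : ℝ × ℝ => exists_hasFDerivAt_coordEquiv_comp_fermiChart
    (hγ.differentiable two_ne_zero p.1) (hγ'.differentiable one_ne_zero p.1) hunit
  have harea := map_withDensity_abs_det_fderiv_eq_addHaar volume hs.nullMeasurableSet
    (fun p _ => (hD p).hasFDerivWithinAt) (coordEquiv.injective.comp_injOn hinj)
  simp only [hdet] at harea
  refine coordEquiv.map_measurableEquiv_injective ?_
  rw [Measure.map_map coordEquiv.measurable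
    (contDiff_fermiChart (k := 1) hγ).continuous.measurable, harea, image_comp,
    ← measurePreserving_coordEquiv.map_eq, coordEquiv.restrict_map, coordEquiv.preimage_image]

/-- The change of the height coordinate to `areaHeight`, above a curve with curvature `κ`. -/
noncomputable def areaShear (σ : ℝ) (κ : ℝ → ℝ) (p : ℝ × ℝ) : ℝ × ℝ :=
  (p.1, areaHeight σ (κ p.1) p.2)

open ContinuousLinearMap in
theorem exists_hasFDerivAt_areaShear {κ : ℝ → ℝ} (σ : ℝ) {p : ℝ × ℝ}
    (hκ : DifferentiableAt ℝ κ p.1) :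
    ∃ D : ℝ × ℝ →L[ℝ] ℝ × ℝ,
      HasFDerivAt (areaShear σ κ) D p ∧
      D.det = 1 - κ p.1 * p.2 := by
  have hfst : HasFDerivAt Prod.fst (fst ℝ ℝ ℝ) p := hasFDerivAt_fst
  have hsnd : HasFDerivAt Prod.snd (snd ℝ ℝ ℝ) p := hasFDerivAt_snd
  have hheight := hsnd.sub (((hκ.hasDerivAt.hasFDerivAt.comp p hfst).mul
    ((hsnd.pow 2).sub_const (σ ^ 2))).mul_const (1 / 2))
  refine ⟨_, (hfst.prodMk (hheight.congr_of_eventuallyEq <|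
      .of_forall fun q => ?_)).congr_fderiv ?_,
    (det_prod_linear_combinations 1 0 (-(deriv κ p.1 * (p.2 ^ 2 - σ ^ 2) / 2))
      (1 - κ p.1 * p.2)).trans (by ring)⟩
  · simp only [areaHeight, Pi.mul_apply, Function.comp_apply, one_div, Pi.sub_apply]
    ring
  · refine ContinuousLinearMap.ext fun q => ?_
    simp only [one_div, Function.comp_apply, Nat.add_one_sub_one, pow_one, nsmul_eq_mul,
      Nat.cast_ofNat, smul_add, ContinuousLinearMap.prod_apply, coe_fst', sub_apply, coe_snd',
      add_apply, smul_apply, smul_eq_mul, comp_apply, toSpanSingleton_apply, one_smul, zero_smul,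
      add_zero, neg_mul, Prod.mk.injEq, true_and]
    ring

theorem map_areaShear_withDensity {κ : ℝ → ℝ} (hκ : Differentiable ℝ κ) (σ : ℝ)
    {s : Set (ℝ × ℝ)} (hs : MeasurableSet s)
    (hinj : InjOn (areaShear σ κ) s) :
    ((volume.restrict s).withDensity fun p => ENNReal.ofReal |1 - κ p.1 * p.2|).map
        (areaShear σ κ) = volume.restrict (areaShear σ κ '' s) := by
  choose D hD hdet using fun p : ℝ × ℝ => exists_hasFDerivAt_areaShear σ (hκ p.1)
  simpa only [hdet] using map_withDensity_abs_det_fderiv_eq_addHaar volume hs.nullMeasurableSet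
    (fun p _ => (hD p).hasFDerivWithinAt) hinj

theorem injOn_areaShear {κ : ℝ → ℝ} {σ : ℝ} {s : Set ℝ} (hκ : ∀ a ∈ s, |κ a| * σ < 1) :
    InjOn (areaShear σ κ) (s ×ˢ Ioo (-σ) σ) := by
  rintro ⟨a, β⟩ ⟨ha, hβ⟩ ⟨a', β'⟩ ⟨-, hβ'⟩ h
  obtain ⟨rfl, hheight⟩ := Prod.mk_inj.1 h
  exact Prod.ext rfl ((leftInvOn_areaHeightInv (hκ a ha)).injOn hβ hβ' hheight)

theorem image_areaShear {κ : ℝ → ℝ} {σ : ℝ} (hσ : 0 < σ) {s : Set ℝ}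
    (hκ : ∀ a ∈ s, |κ a| * σ < 1) :
    areaShear σ κ '' (s ×ˢ Ioo (-σ) σ) = s ×ˢ Ioo (-σ) σ := by
  refine Subset.antisymm ?_ ?_
  · rintro _ ⟨⟨a, β⟩, ⟨ha, hβ⟩, rfl⟩
    exact ⟨ha, mapsTo_areaHeight (hκ a ha) hβ⟩
  · rintro ⟨a, v⟩ ⟨ha, hv⟩
    exact ⟨(a, areaHeightInv σ (κ a) v), ⟨ha, mapsTo_areaHeightInv hσ (hκ a ha) hv⟩,
      Prod.ext rfl (rightInvOn_areaHeightInv hσ (hκ a ha) hv)⟩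

/-- The Fermi chart read in the area coordinate, which makes it area-preserving. -/
noncomputable def equalAreaChart (γ : ℝ → ℝ²) (σ : ℝ) (p : ℝ × ℝ) : ℝ² :=
  fermiChart γ (p.1, areaHeightInv σ (signedCurvature γ p.1) p.2)

theorem continuous_equalAreaChart (hγ : ContDiff ℝ 2 γ) (σ : ℝ) :
    Continuous (equalAreaChart γ σ) := by
  have hκ := continuous_signedCurvature hγ
  exact (contDiff_fermiChart (k := 1) hγ).continuous.comp <| continuous_fst.prodMk <|
    continuous_areaHeightInv.comp ((hκ.comp continuous_fst).prodMk continuous_snd)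

-- The Fermi chart and the shear have the same Jacobian, so it cancels in their quotient.
theorem map_equalAreaChart_restrict (hγ : ContDiff ℝ 3 γ) (hunit : ∀ t, ‖deriv γ t‖ = 1)
    {σ : ℝ} (hσ : 0 < σ) {s : Set ℝ} (hs : MeasurableSet s)
    (hκ : ∀ a ∈ s, |signedCurvature γ a| * σ < 1)
    (hinj : InjOn (fermiChart γ) (s ×ˢ Ioo (-σ) σ)) :
    (volume.restrict (s ×ˢ Ioo (-σ) σ)).map (equalAreaChart γ σ) =
      volume.restrict (fermiChart γ '' (s ×ˢ Ioo (-σ) σ)) := by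
  have hκ_diff : ContDiff ℝ 1 (signedCurvature γ) := contDiff_signedCurvature hγ
  have hrect := hs.prod (measurableSet_Ioo (a := -σ) (b := σ))
  have hshear := map_areaShear_withDensity (hκ_diff.differentiable one_ne_zero) σ hrect
    (injOn_areaShear hκ)
  rw [image_areaShear hσ hκ] at hshear
  have hshear_meas : Measurable (areaShear σ (signedCurvature γ)) := by
    have := hκ_diff.continuous
    unfold areaShear areaHeight
    fun_prop
  have hγ₂ : ContDiff ℝ 2 γ := hγ.of_le (by norm_num)
  rw [← hshear, Measure.map_map (continuous_equalAreaChart hγ₂ σ).measurable hshear_meas,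
    ← map_fermiChart_withDensity hγ₂ hunit hrect hinj]
  refine Measure.map_congr ((withDensity_absolutelyContinuous _ _).ae_le ?_)
  filter_upwards [ae_restrict_mem hrect] with p hp
  simp only [Function.comp_apply, equalAreaChart, areaShear]
  rw [leftInvOn_areaHeightInv (hκ p.1 hp.1) hp.2]

theorem normRestrict_image_fermiChart (hγ : ContDiff ℝ 3 γ) (hunit : ∀ t, ‖deriv γ t‖ = 1)
    {σ : ℝ} (hσ : 0 < σ) {s : Set ℝ} (hs : MeasurableSet s)
    (hκ : ∀ a ∈ s, |signedCurvature γ a| * σ < 1)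
    (hinj : InjOn (fermiChart γ) (s ×ˢ Ioo (-σ) σ)) :
    normRestrict (fermiChart γ '' (s ×ˢ Ioo (-σ) σ)) =
      (normRestrict (s ×ˢ Ioo (-σ) σ)).map (equalAreaChart γ σ) :=
  normRestrict_eq_map (continuous_equalAreaChart (hγ.of_le (by norm_num)) σ).measurable
    (map_equalAreaChart_restrict hγ hunit hσ hs hκ hinj)

end EqualAreaChart

section LocalChart

variable {γ : ℝ → ℝ²}

/-- The linear isomorphism `(x, y) ↦ x T + y N` given by an orthonormal frame `(T, N)`. -/
noncomputable def frameEquiv {v : ℝ²} (hv : ‖v‖ = 1) : (ℝ × ℝ) ≃L[ℝ] ℝ² :=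
  .equivOfInverse
    ((ContinuousLinearMap.fst ℝ ℝ ℝ).smulRight v +
      (ContinuousLinearMap.snd ℝ ℝ ℝ).smulRight (quarterTurn v))
    ((innerSL ℝ v).prod (innerSL ℝ (quarterTurn v)))
    (fun p => by
      have h := inner_quarterTurn_self v
      have h' := real_inner_comm v (quarterTurn v) ▸ h
      simp [inner_add_right, inner_smul_right, h, h', norm_quarterTurn, hv])
    (fun w => by
      simpa [real_inner_comm] using inner_smul_add_inner_quarterTurn_smul hv w)

theorem exists_mem_nhds_injOn_fermiChart (hγ : ContDiff ℝ 2 γ) (hunit : ∀ t, ‖deriv γ t‖ = 1)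
    (a : ℝ) : ∃ u ∈ 𝓝 (a, (0 : ℝ)), InjOn (fermiChart γ) u := by
  have hγ' : ContDiff ℝ 1 (deriv γ) := hγ.deriv'
  have hderiv : HasFDerivAt (fermiChart γ) (frameEquiv (hunit a) : ℝ × ℝ →L[ℝ] ℝ²) (a, 0) :=
    (hasFDerivAt_fermiChart (hγ.differentiable two_ne_zero _)
      (hγ'.differentiable one_ne_zero _) hunit).congr_fderiv <| by
        simp only [mul_zero, sub_zero, one_smul]
        rfl
  have hstrict := (contDiff_fermiChart (k := 1) hγ).contDiffAt.hasStrictFDerivAt' hderiv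
    one_ne_zero
  exact ⟨_, (hstrict.toOpenPartialHomeomorph _).open_source.mem_nhds
    hstrict.mem_toOpenPartialHomeomorph_source, (hstrict.toOpenPartialHomeomorph _).injOn⟩

theorem image_add_smul_eq_image_fermiChart (hunit : ∀ t, ‖deriv γ t‖ = 1) {n : ℝ → ℝ²}
    {s : Set ℝ} (hn : ∀ a ∈ s, ‖n a‖ = 1 ∧ ⟪n a, deriv γ a⟫ = 0) (σ : ℝ) :
    (fun p : ℝ × ℝ => γ p.1 + p.2 • n p.1) '' (s ×ˢ Ioo (-σ) σ) =
      fermiChart γ '' (s ×ˢ Ioo (-σ) σ) := by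
  have hneg : ∀ {β : ℝ}, β ∈ Ioo (-σ) σ → -β ∈ Ioo (-σ) σ := fun hβ =>
    ⟨neg_lt_neg hβ.2, neg_lt.1 hβ.1⟩
  ext z
  constructor <;> rintro ⟨⟨a, β⟩, ⟨ha, hβ⟩, rfl⟩ <;>
    obtain h | h := eq_quarterTurn_or_eq_neg (hunit a) (hn a ha).1 (hn a ha).2
  · exact ⟨(a, β), ⟨ha, hβ⟩, by simp [fermiChart, h]⟩
  · exact ⟨(a, -β), ⟨ha, hneg hβ⟩, by simp [fermiChart, h]⟩
  · exact ⟨(a, β), ⟨ha, hβ⟩, by simp [fermiChart, h]⟩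
  · exact ⟨(a, -β), ⟨ha, hneg hβ⟩, by simp [fermiChart, h]⟩

end LocalChart

section Taylor

variable {ι F : Type*} [NormedAddCommGroup F] [NormedSpace ℝ F] [CompleteSpace F] {l : Filter ι}
  {f : ℝ → F} {c h : ι → ℝ} {a : ℝ}

theorem taylor_remainder_isBigO {n : ℕ} (hf : ContDiff ℝ (n + 1) f) (hc : Tendsto c l (𝓝 a))
    (hh : Tendsto h l (𝓝 0)) :
    (fun i => f (c i + h i) -
        ∑ k ∈ Finset.range (n + 1), ((k.factorial : ℝ)⁻¹ * h i ^ k) • iteratedDeriv k f (c i))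
      =O[l] fun i => h i ^ (n + 1) := by
  set M := ‖iteratedDeriv (n + 1) f a‖ + 1
  have hcont : Continuous (iteratedDeriv (n + 1) f) :=
    hf.continuous_iteratedDeriv (n + 1) (by norm_cast)
  obtain ⟨r, hr, hM⟩ := Metric.eventually_nhds_iff_ball.1
    (hcont.norm.continuousAt.eventually_lt continuousAt_const (lt_add_one _) :
      ∀ᶠ t in 𝓝 a, ‖iteratedDeriv (n + 1) f t‖ < M)
  have hch : Tendsto (fun i => c i + h i) l (𝓝 a) := by simpa using hc.add hh
  refine .of_bound ((n.factorial : ℝ)⁻¹ * M) ?_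
  filter_upwards [hc (Metric.ball_mem_nhds a hr), hch (Metric.ball_mem_nhds a hr)] with i hci hchi
  have hbound : ∀ t ∈ uIoc (0 : ℝ) 1, ‖(1 - t) ^ n • h i ^ (n + 1) •
      iteratedDeriv (n + 1) f (c i + t * h i)‖ ≤ M * ‖h i ^ (n + 1)‖ := by
    intro t ht
    rw [uIoc_of_le zero_le_one] at ht
    have hmem := (convex_ball a r).add_smul_sub_mem hci hchi ⟨ht.1.le, ht.2⟩
    rw [add_sub_cancel_left, smul_eq_mul] at hmem
    calc _ ≤ 1 * (‖h i ^ (n + 1)‖ * M) := by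
          rw [norm_smul, norm_smul]
          gcongr
          · rw [Real.norm_of_nonneg (pow_nonneg (sub_nonneg.2 ht.2) n)]
            exact pow_le_one₀ (by linarith [ht.2]) (by linarith [ht.1])
          · exact (hM _ hmem).le
      _ = _ := by ring
  have htaylor := map_add_eq_sum_add_integral_iteratedFDeriv (f := f) (n := n) (x := c i)
    (y := h i) fun t _ => hf.contDiffAt
  simp only [iteratedFDeriv_apply_eq_iteratedDeriv_mul_prod, Finset.prod_const, Finset.card_univ,
    Fintype.card_fin, smul_eq_mul, smul_smul _ (h i ^ _)] at htaylor
  rw [htaylor, add_sub_cancel_left, norm_smul, norm_inv, Real.norm_natCast, mul_assoc]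
  gcongr
  simpa [smul_smul] using intervalIntegral.norm_integral_le_of_norm_le_const hbound

theorem sub_isBigO (hf : ContDiff ℝ 1 f) (hc : Tendsto c l (𝓝 a)) (hh : Tendsto h l (𝓝 0)) :
    (fun i => f (c i + h i) - f (c i)) =O[l] h := by
  simpa using taylor_remainder_isBigO (n := 0) (by simpa using hf) hc hh

theorem symm_sub_isBigO_pow_three (hf : ContDiff ℝ 3 f) (hc : Tendsto c l (𝓝 a))
    (hh : Tendsto h l (𝓝 0)) :
    (fun i => f (c i + h i) - f (c i - h i) - (2 * h i) • deriv f (c i))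
      =O[l] fun i => h i ^ 3 := by
  have hf' : ContDiff ℝ (2 + 1 : ℕ) f := hf
  have hneg := taylor_remainder_isBigO (n := 2) hf' hc (h := fun i => -h i) (by simpa using hh.neg)
  refine ((taylor_remainder_isBigO (n := 2) hf' hc hh).sub
    (hneg.trans (.of_bound 1 (.of_forall fun i => by simp)))).congr_left fun i => ?_
  simp only [Nat.reduceAdd, Finset.sum_range_succ, Finset.range_zero, Finset.sum_empty,
    Nat.factorial, iteratedDeriv_succ, iteratedDeriv_zero]
  module

theorem symm_sub_isBigO_pow_four (hf : ContDiff ℝ 4 f) (hc : Tendsto c l (𝓝 a))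
    (hh : Tendsto h l (𝓝 0)) :
    (fun i => f (c i + h i) - f (c i - h i) - (2 * h i) • deriv f (c i) -
      (h i ^ 3 / 3) • deriv (deriv (deriv f)) (c i)) =O[l] fun i => h i ^ 4 := by
  have hf' : ContDiff ℝ (3 + 1 : ℕ) f := hf
  have hneg := taylor_remainder_isBigO (n := 3) hf' hc (h := fun i => -h i) (by simpa using hh.neg)
  refine ((taylor_remainder_isBigO (n := 3) hf' hc hh).sub
    (hneg.trans (.of_bound 1 (.of_forall fun i => by simp)))).congr_left fun i => ?_
  simp only [Nat.reduceAdd, Finset.sum_range_succ, Finset.range_zero, Finset.sum_empty,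
    Nat.factorial, iteratedDeriv_succ, iteratedDeriv_zero]
  push_cast
  module

end Taylor

section Chord

variable {ι : Type*} {l : Filter ι} {h σ b : ι → ℝ}

theorem isBigO_one_of_continuous {X F : Type*} [TopologicalSpace X] [NormedAddCommGroup F]
    {f : X → F} (hf : Continuous f) {x : ι → X} {x₀ : X} (hx : Tendsto x l (𝓝 x₀)) :
    (fun i => f (x i)) =O[l] fun _ => (1 : ℝ) :=
  ((hf.tendsto x₀).comp hx).isBigO_one ℝ

theorem isBigO_pow_of_le {m n : ℕ} (hh : Tendsto h l (𝓝 0)) (hmn : m ≤ n) :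
    (fun i => h i ^ n) =O[l] fun i => h i ^ m := by
  obtain ⟨k, rfl⟩ := Nat.exists_eq_add_of_le hmn
  simpa only [pow_add, one_pow, mul_one] using
    (isBigO_refl (fun i => h i ^ m) l).mul ((hh.isBigO_one ℝ).pow k)

-- To first order in the curvature, changing its sign inverts the area coordinate.
theorem areaHeight_inverse_isBigO {k k₀ : ι → ℝ} (hh : Tendsto h l (𝓝 0)) (hσ : σ =O[l] h)
    (hb : b =O[l] h) (hk₀ : k₀ =O[l] fun _ => (1 : ℝ)) (hk : (fun i => k i - k₀ i) =O[l] h)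
    {v : ι → ℝ} (hv : ∀ᶠ i in l, areaHeight (σ i) (k i) (b i) = v i) :
    (fun i => b i - areaHeight (σ i) (-k₀ i) (v i)) =O[l] fun i => h i ^ 3 := by
  have hh_one : h =O[l] fun _ => (1 : ℝ) := hh.isBigO_one ℝ
  have hk_one : k =O[l] fun _ => (1 : ℝ) := by simpa using (hk.trans hh_one).add hk₀
  have hsq : (fun i => b i ^ 2 - σ i ^ 2) =O[l] fun i => h i ^ 2 := (hb.pow 2).sub (hσ.pow 2)
  have hbv : (fun i => b i - v i) =O[l] fun i => h i ^ 2 := by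
    refine ((hk_one.mul hsq).const_mul_left (1 / 2)).congr' ?_ (.of_forall fun i => one_mul _)
    filter_upwards [hv] with i hi
    rw [← hi, areaHeight]
    ring
  have hbv' : (fun i => b i + v i) =O[l] h := by
    have hbv_h : (fun i => b i - v i) =O[l] h :=
      hbv.trans (by simpa [sq] using (isBigO_refl h l).mul hh_one)
    exact ((hb.const_mul_left 2).sub hbv_h).congr_left fun i => by ring
  have hmain := ((hk.mul hsq).const_mul_left (1 / 2)).add <|
    ((hk₀.mul (hbv.mul hbv')).const_mul_left (1 / 2)).congr_right fun i =>
      (by ring : 1 * (h i ^ 2 * h i) = h i * h i ^ 2)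
  refine hmain.congr' ?_ (.of_forall fun i => by ring)
  filter_upwards [hv] with i hi
  simp only [areaHeight] at hi ⊢
  linear_combination -hi

theorem norm_sub_inner_le {F : Type*} [NormedAddCommGroup F] [InnerProductSpace ℝ F] {z e : F}
    (he : ‖e‖ = 1) (hz : 0 < ⟪z, e⟫) (s : ℝ) :
    ‖z‖ - ⟪z, e⟫ ≤ ‖z - s • e‖ ^ 2 / ⟪z, e⟫ := by
  have hle : ⟪z, e⟫ ≤ ‖z‖ := by simpa [he] using real_inner_le_norm z e
  have hsq : ‖z‖ ^ 2 - ⟪z, e⟫ ^ 2 ≤ ‖z - s • e‖ ^ 2 := by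
    rw [norm_sub_sq_real, inner_smul_right, norm_smul, he, mul_one, Real.norm_eq_abs, sq_abs]
    linarith [sq_nonneg (⟪z, e⟫ - s)]
  rw [le_div_iff₀ hz]
  calc (‖z‖ - ⟪z, e⟫) * ⟪z, e⟫ ≤ (‖z‖ - ⟪z, e⟫) * (‖z‖ + ⟪z, e⟫) := by
        gcongr
        linarith [norm_nonneg z]
    _ ≤ ‖z - s • e‖ ^ 2 := by linarith

theorem inner_unit_isBigO {F : Type*} [NormedAddCommGroup F] [InnerProductSpace ℝ F]
    {u : ι → F} {e : ι → F} (he : ∀ i, ‖e i‖ = 1) :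
    (fun i => ⟪u i, e i⟫) =O[l] u :=
  .of_bound 1 <| .of_forall fun i => by
    simpa [he i] using norm_inner_le_norm (𝕜 := ℝ) (u i) (e i)

variable {γ : ℝ → ℝ²} {c b₁ b₂ : ι → ℝ} {a : ℝ}

/-- The difference between the chord joining the points `(c - h, b₁)` and `(c + h, b₂)` of the
Fermi chart and its leading term `2 h (1 - κ b₁) T`, where `κ` and `T` are the curvature and the
tangent at `c`. -/
noncomputable def chordDefect (γ : ℝ → ℝ²) (c h b₁ b₂ : ℝ) : ℝ² :=
  fermiChart γ (c + h, b₂) - fermiChart γ (c - h, b₁) -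
    (2 * h - 2 * h * signedCurvature γ c * b₁) • deriv γ c

theorem normal_chord_isBigO (hγ : ContDiff ℝ 4 γ) (hunit : ∀ t, ‖deriv γ t‖ = 1)
    (hc : Tendsto c l (𝓝 a)) (hh : Tendsto h l (𝓝 0)) (hb₁ : b₁ =O[l] h) :
    (fun i => b₁ i • (quarterTurn (deriv γ (c i + h i)) - quarterTurn (deriv γ (c i - h i)) +
      (2 * h i * signedCurvature γ (c i)) • deriv γ (c i))) =O[l] fun i => h i ^ 4 := by
  have hγ' : ContDiff ℝ 3 (deriv γ) := hγ.deriv'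
  have hN := symm_sub_isBigO_pow_three (quarterTurn.contDiff.comp hγ') hc hh
  refine (hb₁.smul hN).congr (fun i => ?_) fun i => by rw [smul_eq_mul]; ring
  have hderiv := (hasDerivAt_quarterTurn_deriv (a := c i)
    (hγ'.differentiable (by norm_num) _) hunit).deriv
  simp only [Function.comp_def, hderiv, smul_neg, sub_neg_eq_add, smul_smul]

theorem chord_sub_isBigO (hγ : ContDiff ℝ 4 γ) (hunit : ∀ t, ‖deriv γ t‖ = 1)
    (hc : Tendsto c l (𝓝 a)) (hh : Tendsto h l (𝓝 0)) (hb₁ : b₁ =O[l] h)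
    (hb : (fun i => b₂ i - b₁ i) =O[l] fun i => h i ^ 3) :
    (fun i => chordDefect γ (c i) (h i) (b₁ i) (b₂ i) -
      (h i ^ 3 / 3) • deriv (deriv (deriv γ)) (c i) -
      (b₂ i - b₁ i) • quarterTurn (deriv γ (c i))) =O[l] fun i => h i ^ 4 := by
  have hγ' : ContDiff ℝ 1 (deriv γ) := (hγ.of_le (by norm_num) : ContDiff ℝ 2 γ).deriv'
  have hN : (fun i => (b₂ i - b₁ i) • (quarterTurn (deriv γ (c i + h i)) -
      quarterTurn (deriv γ (c i)))) =O[l] fun i => h i ^ 4 :=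
    (hb.smul (sub_isBigO (quarterTurn.contDiff.comp hγ') hc hh)).congr_right fun i => by
      rw [smul_eq_mul]; ring
  refine (((symm_sub_isBigO_pow_four hγ hc hh).add
    (normal_chord_isBigO hγ hunit hc hh hb₁)).add hN).congr_left fun i => ?_
  simp only [chordDefect, fermiChart]
  module

theorem inner_chordDefect_isBigO (hγ : ContDiff ℝ 4 γ) (hunit : ∀ t, ‖deriv γ t‖ = 1)
    (hc : Tendsto c l (𝓝 a)) (hh : Tendsto h l (𝓝 0)) (hb₁ : b₁ =O[l] h)
    (hb : (fun i => b₂ i - b₁ i) =O[l] fun i => h i ^ 3) :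
    (fun i => ⟪chordDefect γ (c i) (h i) (b₁ i) (b₂ i), deriv γ (c i)⟫ +
      h i ^ 3 * signedCurvature γ (c i) ^ 2 / 3) =O[l] fun i => h i ^ 4 := by
  refine ((inner_unit_isBigO fun i => hunit (c i)).trans
    (chord_sub_isBigO hγ hunit hc hh hb₁ hb)).congr_left fun i => ?_
  rw [inner_sub_left, inner_sub_left, real_inner_smul_left, real_inner_smul_left,
    inner_quarterTurn_self, inner_deriv_deriv_deriv_deriv (hγ.of_le (by norm_num)) hunit]
  ring

theorem chordDefect_isBigO (hγ : ContDiff ℝ 4 γ) (hunit : ∀ t, ‖deriv γ t‖ = 1)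
    (hc : Tendsto c l (𝓝 a)) (hh : Tendsto h l (𝓝 0)) (hb₁ : b₁ =O[l] h)
    (hb : (fun i => b₂ i - b₁ i) =O[l] fun i => h i ^ 3) :
    (fun i => chordDefect γ (c i) (h i) (b₁ i) (b₂ i)) =O[l] fun i => h i ^ 3 := by
  have hγ₃ : ContDiff ℝ 1 (deriv (deriv (deriv γ))) := by
    have : ContDiff ℝ 3 (deriv γ) := hγ.deriv'
    have : ContDiff ℝ 2 (deriv (deriv γ)) := this.deriv'
    exact this.deriv'
  have hthird : (fun i => (h i ^ 3 / 3) • deriv (deriv (deriv γ)) (c i))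
      =O[l] fun i => h i ^ 3 :=
    (((isBigO_refl (fun i => h i ^ 3) l).const_mul_left (1 / 3)).smul
      (isBigO_one_of_continuous hγ₃.continuous hc)).congr
        (fun i => by simp [div_eq_inv_mul]) fun i => by simp
  have hnormal : (fun i => (b₂ i - b₁ i) • quarterTurn (deriv γ (c i)))
      =O[l] fun i => h i ^ 3 :=
    IsBigO.trans (.of_bound 1 (.of_forall fun i => by
      simp [norm_smul, norm_quarterTurn, hunit])) hb
  exact ((((chord_sub_isBigO hγ hunit hc hh hb₁ hb).trans
    (isBigO_pow_of_le hh (by norm_num))).add hthird).add hnormal).congr_left fun i => by abel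

/-- The third-order expansion in `h` of the distance between the points `(c - h, b)` and
`(c + h, b)` of the Fermi chart of a curve with curvature `k` at `c`. -/
noncomputable def chordModel (k h b : ℝ) : ℝ :=
  2 * h - k ^ 2 * h ^ 3 / 3 - 2 * h * k * b

theorem inner_chord_sub_chordModel_isBigO (hγ : ContDiff ℝ 4 γ) (hunit : ∀ t, ‖deriv γ t‖ = 1)
    (hc : Tendsto c l (𝓝 a)) (hh : Tendsto h l (𝓝 0)) (hb₁ : b₁ =O[l] h)
    (hb : (fun i => b₂ i - b₁ i) =O[l] fun i => h i ^ 3) {w : ι → ℝ}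
    (hw : (fun i => b₁ i - w i) =O[l] fun i => h i ^ 3) :
    (fun i => ⟪fermiChart γ (c i + h i, b₂ i) - fermiChart γ (c i - h i, b₁ i), deriv γ (c i)⟫ -
      chordModel (signedCurvature γ (c i)) (h i) (w i)) =O[l] fun i => h i ^ 4 := by
  have hκ := continuous_signedCurvature (hγ.of_le (by norm_num))
  have hheight := ((isBigO_refl h l).mul ((isBigO_one_of_continuous hκ hc).mul hw)).const_mul_left 2
  refine ((inner_chordDefect_isBigO hγ hunit hc hh hb₁ hb).sub
    (hheight.congr_right fun i => by ring)).congr_left fun i => ?_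
  rw [chordDefect, inner_sub_left, real_inner_smul_left, real_inner_self_eq_norm_sq, hunit,
    chordModel]
  ring

theorem eventually_le_inner_chord (hγ : ContDiff ℝ 4 γ) (hunit : ∀ t, ‖deriv γ t‖ = 1)
    (hc : Tendsto c l (𝓝 a)) (hh : Tendsto h l (𝓝[>] 0)) (hb₁ : b₁ =O[l] h)
    (hb : (fun i => b₂ i - b₁ i) =O[l] fun i => h i ^ 3) :
    ∀ᶠ i in l, h i ≤
      ⟪fermiChart γ (c i + h i, b₂ i) - fermiChart γ (c i - h i, b₁ i), deriv γ (c i)⟫ := by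
  obtain ⟨hh₀, hh_pos⟩ := tendsto_nhdsWithin_iff.1 hh
  have hκ := continuous_signedCurvature (hγ.of_le (by norm_num))
  have hcurv : (fun i => 2 * h i * signedCurvature γ (c i) * b₁ i) =O[l] fun i => h i ^ 2 :=
    (((isBigO_refl h l).const_mul_left 2).mul
      (isBigO_one_of_continuous hκ hc)).mul hb₁ |>.congr_right fun i => by ring
  have hdefect := ((inner_unit_isBigO fun i => hunit (c i)).trans
    (chordDefect_isBigO hγ hunit hc hh₀ hb₁ hb)).trans
      (isBigO_pow_of_le hh₀ (by norm_num : 2 ≤ 3))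
  have hsmall := (hdefect.sub hcurv).trans_isLittleO <|
    ((isBigO_refl h l).mul_isLittleO ((isLittleO_one_iff ℝ).2 hh₀)).congr
      (fun i => (sq (h i)).symm) fun i => mul_one _
  filter_upwards [hsmall.bound one_pos, hh_pos] with i hi hi_pos
  rw [Real.norm_eq_abs, Real.norm_of_nonneg (mem_Ioi.1 hi_pos).le, one_mul, abs_le,
    chordDefect, inner_sub_left, real_inner_smul_left, real_inner_self_eq_norm_sq, hunit] at hi
  linarith [hi.1]

theorem norm_chord_sub_inner_isBigO (hγ : ContDiff ℝ 4 γ) (hunit : ∀ t, ‖deriv γ t‖ = 1)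
    (hc : Tendsto c l (𝓝 a)) (hh : Tendsto h l (𝓝[>] 0)) (hb₁ : b₁ =O[l] h)
    (hb : (fun i => b₂ i - b₁ i) =O[l] fun i => h i ^ 3) :
    (fun i => ‖fermiChart γ (c i + h i, b₂ i) - fermiChart γ (c i - h i, b₁ i)‖ -
      ⟪fermiChart γ (c i + h i, b₂ i) - fermiChart γ (c i - h i, b₁ i), deriv γ (c i)⟫)
      =O[l] fun i => h i ^ 4 := by
  obtain ⟨hh₀, hh_pos⟩ := tendsto_nhdsWithin_iff.1 hh
  have hquot : (fun i => ‖chordDefect γ (c i) (h i) (b₁ i) (b₂ i)‖ ^ 2 / h i)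
      =O[l] fun i => h i ^ 5 :=
    (((chordDefect_isBigO hγ hunit hc hh₀ hb₁ hb).norm_left.pow 2).mul
      (isBigO_refl (fun i => (h i)⁻¹) l)).congr' .rfl <| by
        filter_upwards [hh_pos] with i hi
        field_simp [(mem_Ioi.1 hi).ne']
  refine IsBigO.trans (.of_bound' ?_) (hquot.trans (isBigO_pow_of_le hh₀ (by norm_num)))
  filter_upwards [hh_pos, eventually_le_inner_chord hγ hunit hc hh hb₁ hb] with i hi hle
  rw [Real.norm_of_nonneg (sub_nonneg.2 <| (real_inner_le_norm _ _).trans_eq <| by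
      rw [hunit, mul_one]),
    Real.norm_of_nonneg (div_nonneg (sq_nonneg _) (mem_Ioi.1 hi).le)]
  exact (norm_sub_inner_le (hunit (c i)) ((mem_Ioi.1 hi).trans_le hle) _).trans
    (div_le_div_of_nonneg_left (sq_nonneg _) hi hle)

theorem norm_chord_sub_chordModel_isBigO (hγ : ContDiff ℝ 4 γ) (hunit : ∀ t, ‖deriv γ t‖ = 1)
    (hc : Tendsto c l (𝓝 a)) (hh : Tendsto h l (𝓝[>] 0)) (hb₁ : b₁ =O[l] h)
    (hb : (fun i => b₂ i - b₁ i) =O[l] fun i => h i ^ 3) {w : ι → ℝ}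
    (hw : (fun i => b₁ i - w i) =O[l] fun i => h i ^ 3) :
    (fun i => ‖fermiChart γ (c i + h i, b₂ i) - fermiChart γ (c i - h i, b₁ i)‖ -
      chordModel (signedCurvature γ (c i)) (h i) (w i)) =O[l] fun i => h i ^ 4 :=
  ((norm_chord_sub_inner_isBigO hγ hunit hc hh hb₁ hb).add
    (inner_chord_sub_chordModel_isBigO hγ hunit hc (hh.mono_right nhdsWithin_le_nhds) hb₁ hb
      hw)).congr_left fun _ => sub_add_sub_cancel _ _ _

end Chord

section EqualAreaChord

variable {ι : Type*} {l : Filter ι} {h σ v : ι → ℝ}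

theorem eventually_abs_mul_lt_one {k : ι → ℝ} (hσ : Tendsto σ l (𝓝 0))
    (hk : k =O[l] fun _ => (1 : ℝ)) : ∀ᶠ i in l, |k i| * σ i < 1 := by
  have hkσ := hk.norm_left.mul_isLittleO ((isLittleO_one_iff ℝ).2 hσ)
  rw [mul_one, isLittleO_one_iff] at hkσ
  exact hkσ.eventually_lt_const one_pos

theorem areaHeightInv_isBigO {k : ι → ℝ} (hσ : Tendsto σ l (𝓝 0))
    (hk : k =O[l] fun _ => (1 : ℝ)) (hv : ∀ᶠ i in l, v i ∈ Ioo (-σ i) (σ i)) :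
    (fun i => areaHeightInv (σ i) (k i) (v i)) =O[l] σ := by
  refine .of_bound' ?_
  filter_upwards [eventually_abs_mul_lt_one hσ hk, hv] with i hki hvi
  have hσ_pos : 0 < σ i := by linarith [hvi.1, hvi.2]
  exact (abs_lt.2 (mapsTo_areaHeightInv hσ_pos hki hvi)).le.trans (le_abs_self _)

theorem areaHeightInv_sub_areaHeight_isBigO {k k₀ : ι → ℝ} (hh : Tendsto h l (𝓝 0))
    (hσ : σ =O[l] h) (hk₀ : k₀ =O[l] fun _ => (1 : ℝ))
    (hk : (fun i => k i - k₀ i) =O[l] h) (hv : ∀ᶠ i in l, v i ∈ Ioo (-σ i) (σ i)) :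
    (fun i => areaHeightInv (σ i) (k i) (v i) - areaHeight (σ i) (-k₀ i) (v i))
      =O[l] fun i => h i ^ 3 := by
  have hσ₀ : Tendsto σ l (𝓝 0) := hσ.trans_tendsto hh
  have hk_one : k =O[l] fun _ => (1 : ℝ) := by
    simpa using (hk.trans (hh.isBigO_one ℝ)).add hk₀
  refine areaHeight_inverse_isBigO hh hσ ((areaHeightInv_isBigO hσ₀ hk_one hv).trans hσ) hk₀ hk ?_
  filter_upwards [eventually_abs_mul_lt_one hσ₀ hk_one, hv] with i hki hvi
  exact rightInvOn_areaHeightInv (by linarith [hvi.1, hvi.2]) hki hvi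

variable {γ : ℝ → ℝ²} {c : ι → ℝ} {a : ℝ}

theorem equalAreaChart_height_isBigO (hγ : ContDiff ℝ 3 γ)
    (hc : Tendsto c l (𝓝 a)) (hh : Tendsto h l (𝓝 0)) (hσ : σ =O[l] h)
    (hv : ∀ᶠ i in l, v i ∈ Ioo (-σ i) (σ i)) :
    (fun i => areaHeightInv (σ i) (signedCurvature γ (c i + h i)) (v i) -
      areaHeight (σ i) (-signedCurvature γ (c i)) (v i)) =O[l] fun i => h i ^ 3 := by
  have hκ : ContDiff ℝ 1 (signedCurvature γ) := contDiff_signedCurvature hγ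
  exact areaHeightInv_sub_areaHeight_isBigO hh hσ (isBigO_one_of_continuous hκ.continuous hc)
    (sub_isBigO hκ hc hh) hv

theorem equalAreaChart_chord_isBigO (hγ : ContDiff ℝ 4 γ) (hunit : ∀ t, ‖deriv γ t‖ = 1)
    (hc : Tendsto c l (𝓝 a)) (hh : Tendsto h l (𝓝[>] 0)) (hσ : σ =O[l] h)
    (hv : ∀ᶠ i in l, v i ∈ Ioo (-σ i) (σ i)) :
    ((fun i => ⟪equalAreaChart γ (σ i) (c i + h i, v i) - equalAreaChart γ (σ i) (c i - h i, v i),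
        deriv γ (c i)⟫ - chordModel (signedCurvature γ (c i)) (h i)
          (areaHeight (σ i) (-signedCurvature γ (c i)) (v i))) =O[l] fun i => h i ^ 4) ∧
      (fun i => ‖equalAreaChart γ (σ i) (c i + h i, v i) -
        equalAreaChart γ (σ i) (c i - h i, v i)‖ - chordModel (signedCurvature γ (c i)) (h i)
          (areaHeight (σ i) (-signedCurvature γ (c i)) (v i))) =O[l] fun i => h i ^ 4 := by
  have hh₀ : Tendsto h l (𝓝 0) := hh.mono_right nhdsWithin_le_nhds
  have hneg : Tendsto (fun i => -h i) l (𝓝 0) := by simpa using hh₀.neg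
  have hγ₃ : ContDiff ℝ 3 γ := hγ.of_le (by norm_num)
  have hκ := continuous_signedCurvature (hγ.of_le (by norm_num))
  have hcsub : Tendsto (fun i => c i - h i) l (𝓝 a) := by simpa using hc.sub hh₀
  have hb₁ := (areaHeightInv_isBigO (hσ.trans_tendsto hh₀)
    (isBigO_one_of_continuous hκ hcsub) hv).trans hσ
  have hw₁ : (fun i => areaHeightInv (σ i) (signedCurvature γ (c i - h i)) (v i) -
      areaHeight (σ i) (-signedCurvature γ (c i)) (v i)) =O[l] fun i => h i ^ 3 :=
    (equalAreaChart_height_isBigO hγ₃ hc hneg hσ.neg_right hv).trans <|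
      .of_bound' <| .of_forall fun i => by simp
  have hb := ((equalAreaChart_height_isBigO hγ₃ hc hh₀ hσ hv).sub hw₁).congr_left
    fun _ => sub_sub_sub_cancel_right _ _ _
  exact ⟨inner_chord_sub_chordModel_isBigO hγ hunit hc hh₀ hb₁ hb hw₁,
    norm_chord_sub_chordModel_isBigO hγ hunit hc hh hb₁ hb hw₁⟩

theorem norm_sub_sub_chordModel_isBigO (hγ : ContDiff ℝ 4 γ) (hunit : ∀ t, ‖deriv γ t‖ = 1)
    (hc : Tendsto c l (𝓝 a)) (hh : Tendsto h l (𝓝[>] 0)) :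
    (fun i => ‖γ (c i + h i) - γ (c i - h i)‖ - chordModel (signedCurvature γ (c i)) (h i) 0)
      =O[l] fun i => h i ^ 4 := by
  simpa [fermiChart] using norm_chord_sub_chordModel_isBigO hγ hunit hc hh (isBigO_zero h l)
    (b₂ := 0) (w := 0) (by simpa using isBigO_zero _ l) (by simpa using isBigO_zero _ l)

end EqualAreaChord

section Scales

/-- Simultaneous limits `δ → 0+` of triples `(δ, σ, ε)` subject to `0 < σ, ε ≤ δ / 4`. -/
def testScales : Filter (ℝ × ℝ × ℝ) :=
  comap Prod.fst (𝓝[>] 0) ⊓ 𝓟 {q | 0 < q.2.1 ∧ 0 < q.2.2 ∧ max q.2.1 q.2.2 ≤ q.1 / 4}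

theorem eventually_testScales {p : ℝ × ℝ × ℝ → Prop} :
    (∀ᶠ q in testScales, p q) ↔ ∃ δ₁ > 0, ∀ δ ∈ Ioc 0 δ₁, ∀ σ ε : ℝ,
      0 < σ → 0 < ε → max σ ε ≤ δ / 4 → p (δ, σ, ε) := by
  rw [testScales, eventually_inf_principal,
    ((nhdsGT_basis_Ioc (0 : ℝ)).comap Prod.fst).eventually_iff]
  simp only [mem_preimage, mem_ofPred_eq, Prod.forall, and_imp]
  exact exists_congr fun δ₁ => and_congr_right fun _ =>
    ⟨fun h δ hδ σ ε => h δ σ ε hδ, fun h δ σ ε hδ => h δ hδ σ ε⟩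

theorem tendsto_fst_testScales : Tendsto Prod.fst testScales (𝓝[>] 0) :=
  tendsto_comap.mono_left inf_le_left

theorem eventually_mem_testScales :
    ∀ᶠ q in testScales, 0 < q.2.1 ∧ 0 < q.2.2 ∧ max q.2.1 q.2.2 ≤ q.1 / 4 :=
  mem_inf_of_right (mem_principal_self _)

/-- The domain of the area coordinates of a test measure at the scales `(δ, σ, ε)`. -/
def testRectangle (q : ℝ × ℝ × ℝ) : Set (ℝ × ℝ) :=
  Ioo (-q.2.2) q.2.2 ×ˢ Ioo (-q.2.1) q.2.1

/-- The filter `testScales` together with a point of the corresponding test rectangle: its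
asymptotics are the asymptotics along `testScales` that are uniform on the rectangle. -/
def testPoints : Filter ((ℝ × ℝ × ℝ) × ℝ × ℝ) :=
  comap Prod.fst testScales ⊓ 𝓟 {i | i.2 ∈ testRectangle i.1}

theorem eventually_testPoints {p : (ℝ × ℝ × ℝ) × ℝ × ℝ → Prop} :
    (∀ᶠ i in testPoints, p i) ↔ ∀ᶠ q in testScales, ∀ x ∈ testRectangle q, p (q, x) := by
  rw [testPoints, eventually_inf_principal, eventually_comap]
  refine eventually_congr (.of_forall fun q => ?_)
  exact ⟨fun h x hx => h (q, x) rfl hx, by rintro h ⟨_, x⟩ rfl hx; exact h x hx⟩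

theorem tendsto_fst_testPoints : Tendsto Prod.fst testPoints testScales :=
  tendsto_comap.mono_left inf_le_left

theorem eventually_rectangle_subset {u : Set (ℝ × ℝ)} (hu : u ∈ 𝓝 (0, 0)) :
    ∀ᶠ q in testScales, Ioo (-q.1) (2 * q.1) ×ˢ Ioo (-q.1) q.1 ⊆ u := by
  obtain ⟨r, hr, hru⟩ := Metric.mem_nhds_iff.1 hu
  rw [← ball_prod_same, Real.ball_eq_Ioo] at hru
  filter_upwards [tendsto_fst_testScales (Ioo_mem_nhdsGT (half_pos hr))] with q hq
  exact (Set.prod_mono (Ioo_subset_Ioo (by linarith [hq.2]) (by linarith [hq.2]))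
    (Ioo_subset_Ioo (by linarith [hq.2]) (by linarith [hq.2]))).trans hru

end Scales

section Mean

theorem integral_cubic (r c₀ c₁ c₂ c₃ : ℝ) :
    ∫ x in -r..r, (c₀ + c₁ * x + c₂ * x ^ 2 + c₃ * x ^ 3) = 2 * r * c₀ + 2 * r ^ 3 / 3 * c₂ := by
  have hderiv : ∀ x ∈ uIcc (-r) r,
      HasDerivAt (fun x => c₀ * x + c₁ / 2 * x ^ 2 + c₂ / 3 * x ^ 3 + c₃ / 4 * x ^ 4)
        (c₀ + c₁ * x + c₂ * x ^ 2 + c₃ * x ^ 3) x := fun x _ =>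
    (((((hasDerivAt_id x).const_mul c₀).add ((hasDerivAt_pow 2 x).const_mul (c₁ / 2))).add
      ((hasDerivAt_pow 3 x).const_mul (c₂ / 3))).add
        ((hasDerivAt_pow 4 x).const_mul (c₃ / 4))).congr_deriv (by norm_num; ring)
  rw [intervalIntegral.integral_eq_sub_of_hasDerivAt hderiv
    (Continuous.intervalIntegrable (by fun_prop) _ _)]
  ring

theorem integral_normRestrict_rectangle {f : ℝ × ℝ → ℝ} (hf : Continuous f) {σ ε : ℝ} (hσ : 0 < σ)
    (hε : 0 < ε) :
    ∫ p, f p ∂normRestrict (Ioo (-ε) ε ×ˢ Ioo (-σ) σ) =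
      (4 * ε * σ)⁻¹ * ∫ x in -ε..ε, ∫ v in -σ..σ, f (x, v) := by
  have hint : IntegrableOn f (Ioo (-ε) ε ×ˢ Ioo (-σ) σ) (volume.prod volume) :=
    integrableOn_of_continuous_of_isBounded hf
      ((Metric.isBounded_Ioo _ _).prod (Metric.isBounded_Ioo _ _))
  simp only [intervalIntegral.integral_of_le (neg_lt_self hε).le,
    intervalIntegral.integral_of_le (neg_lt_self hσ).le, integral_Ioc_eq_integral_Ioo]
  rw [normRestrict, integral_smul_measure, Measure.volume_eq_prod, setIntegral_prod _ hint,
    Measure.prod_prod, Real.volume_Ioo, Real.volume_Ioo, smul_eq_mul, ENNReal.toReal_inv,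
    ENNReal.toReal_mul, ENNReal.toReal_ofReal (by linarith), ENNReal.toReal_ofReal (by linarith)]
  ring_nf

theorem integral_chordModel_normRestrict (k δ : ℝ) {σ ε : ℝ} (hσ : 0 < σ) (hε : 0 < ε) :
    ∫ p : ℝ × ℝ, chordModel k (δ / 2 - p.1) (areaHeight σ (-k) p.2)
        ∂normRestrict (Ioo (-ε) ε ×ˢ Ioo (-σ) σ) =
      chordModel k (δ / 2) 0 + k ^ 2 * δ * (σ ^ 2 / 3 - ε ^ 2 / 6) := by
  rw [integral_normRestrict_rectangle (by unfold chordModel areaHeight; fun_prop) hσ hε]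
  have hheight : ∀ x, ∫ v in -σ..σ, chordModel k (δ / 2 - x) (areaHeight σ (-k) v) =
      2 * σ * chordModel k (δ / 2 - x) (-(k * σ ^ 2 / 3)) := fun x =>
    calc _ = ∫ v in -σ..σ, (chordModel k (δ / 2 - x) (-(k * σ ^ 2 / 2)) +
          (-(2 * (δ / 2 - x) * k)) * v + (-((δ / 2 - x) * k ^ 2)) * v ^ 2 + 0 * v ^ 3) := by
          refine intervalIntegral.integral_congr fun v _ => ?_
          simp only [chordModel, areaHeight]
          ring
      _ = _ := by
          rw [integral_cubic, chordModel, chordModel]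
          ring
  have hlength : ∫ x in -ε..ε, 2 * σ * chordModel k (δ / 2 - x) (-(k * σ ^ 2 / 3)) =
      4 * ε * σ * (chordModel k (δ / 2) (-(k * σ ^ 2 / 3)) - k ^ 2 * δ * ε ^ 2 / 6) :=
    calc _ = ∫ x in -ε..ε, (2 * σ * chordModel k (δ / 2) (-(k * σ ^ 2 / 3)) +
          (2 * σ * (k ^ 2 * δ ^ 2 / 4 - 2 - 2 * k ^ 2 * σ ^ 2 / 3)) * x +
          (-(σ * k ^ 2 * δ)) * x ^ 2 + (2 * σ * k ^ 2 / 3) * x ^ 3) := by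
          refine intervalIntegral.integral_congr fun x _ => ?_
          simp only [chordModel]
          ring
      _ = _ := by
          rw [integral_cubic]
          ring
  simp only [hheight]
  rw [hlength, inv_mul_cancel_left₀ (by positivity), chordModel, chordModel]
  ring

end Mean

section TestMeasures

variable {γ : ℝ → ℝ²}

theorem eventually_normRestrict_image_eq_map (hγ : ContDiff ℝ 3 γ) (hunit : ∀ t, ‖deriv γ t‖ = 1)
    {n : ℝ → ℝ²} (hn : ∀ᶠ a in 𝓝 0, ‖n a‖ = 1 ∧ ⟪n a, deriv γ a⟫ = 0) :
    ∀ᶠ q in testScales, ∀ t ∈ Icc 0 q.1,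
      normRestrict ((fun p : ℝ × ℝ => γ p.1 + p.2 • n p.1) ''
          (Ioo (t - q.2.2) (t + q.2.2) ×ˢ Ioo (-q.2.1) q.2.1)) =
        (normRestrict (Ioo (t - q.2.2) (t + q.2.2) ×ˢ Ioo (-q.2.1) q.2.1)).map
          (equalAreaChart γ q.2.1) := by
  obtain ⟨u, hu, hinj⟩ := exists_mem_nhds_injOn_fermiChart (hγ.of_le (by norm_num)) hunit 0
  have hκ := continuous_signedCurvature (hγ.of_le (by norm_num))
  have hlt : ∀ᶠ p : ℝ × ℝ in 𝓝 (0, 0), |signedCurvature γ p.1| * p.2 < 1 :=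
    ContinuousAt.eventually_lt (by fun_prop) continuousAt_const (by simp)
  have hnormal : ∀ᶠ p : ℝ × ℝ in 𝓝 (0, 0), ‖n p.1‖ = 1 ∧ ⟪n p.1, deriv γ p.1⟫ = 0 :=
    (continuous_fst.tendsto ((0 : ℝ), (0 : ℝ))).eventually hn
  filter_upwards [eventually_rectangle_subset (inter_mem hu (hlt.and hnormal)),
    eventually_mem_testScales] with ⟨δ, σ, ε⟩ hsub ⟨hσ, _, hmax⟩ t ht
  obtain ⟨hσδ, hεδ⟩ := max_le_iff.1 hmax
  have hlength : Ioo (t - ε) (t + ε) ⊆ Ioo (-δ) (2 * δ) :=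
    Ioo_subset_Ioo (by linarith [ht.1]) (by linarith [ht.2])
  have hmem : ∀ a ∈ Ioo (t - ε) (t + ε), (a, σ) ∈ Ioo (-δ) (2 * δ) ×ˢ Ioo (-δ) δ :=
    fun a ha => ⟨hlength ha, by linarith, by linarith⟩
  rw [image_add_smul_eq_image_fermiChart hunit fun a ha => (hsub (hmem a ha)).2.2]
  refine normRestrict_image_fermiChart hγ hunit hσ measurableSet_Ioo
    (fun a ha => (hsub (hmem a ha)).2.1) (hinj.mono fun p hp => (hsub ?_).1)
  exact ⟨hlength hp.1, Ioo_subset_Ioo (by linarith) (by linarith) hp.2⟩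

theorem eventually_W1_normRestrict_image_eq (hγ : ContDiff ℝ 3 γ) (hunit : ∀ t, ‖deriv γ t‖ = 1)
    {n : ℝ → ℝ²} (hn : ∀ᶠ a in 𝓝 0, ‖n a‖ = 1 ∧ ⟪n a, deriv γ a⟫ = 0) {μ : ℝ → ℝ → ℝ → Measure ℝ²}
    (hμ : ∀ t σ ε, μ t σ ε = normRestrict ((fun p : ℝ × ℝ => γ p.1 + p.2 • n p.1) ''
      (Ioo (t - ε) (t + ε) ×ˢ Ioo (-σ) σ))) :
    ∀ᶠ q in testScales, W1 (μ 0 q.2.1 q.2.2) (μ q.1 q.2.1 q.2.2) =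
      W1 ((normRestrict (testRectangle q)).map (equalAreaChart γ q.2.1))
        ((normRestrict (testRectangle q)).map
          (equalAreaChart γ q.2.1 ∘ Prod.map (q.1 - ·) id)) := by
  filter_upwards [eventually_normRestrict_image_eq_map hγ hunit hn, eventually_mem_testScales]
    with ⟨δ, σ, ε⟩ hmap ⟨hσ, _, hmax⟩
  have hδ : 0 ≤ δ := by linarith [hσ.trans_le (le_max_left σ ε)]
  simp only at hmap hσ
  have hchart : Measurable (equalAreaChart γ σ) :=
    (continuous_equalAreaChart (hγ.of_le (by norm_num)) σ).measurable
  have hreflect := normRestrict_const_sub_preimage δ (measurableSet_Ioo (a := δ - ε) (b := δ + ε))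
    (measurableSet_Ioo (a := -σ) (b := σ))
  rw [preimage_const_sub_Ioo, sub_add_cancel_left, sub_sub_cancel] at hreflect
  rw [hμ, hμ, hmap 0 ⟨le_rfl, hδ⟩, hmap δ ⟨hδ, le_rfl⟩, hreflect,
    Measure.map_map hchart (by fun_prop), zero_sub, zero_add, testRectangle]

end TestMeasures

section Expansion

variable {γ : ℝ → ℝ²}

theorem isBigO_fst_testScales : (fun q : ℝ × ℝ × ℝ => q.2.1) =O[testScales] Prod.fst ∧
    (fun q : ℝ × ℝ × ℝ => q.2.2) =O[testScales] Prod.fst := by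
  constructor <;> refine .of_bound' ?_ <;>
  · filter_upwards [eventually_mem_testScales] with q ⟨hσ, hε, hmax⟩
    obtain ⟨hσδ, hεδ⟩ := max_le_iff.1 hmax
    rw [Real.norm_of_nonneg (by linarith), Real.norm_of_nonneg (by linarith)]
    linarith

theorem eventually_half_sub_mem_Icc :
    ∀ᶠ i in testPoints, i.1.1 / 2 - i.2.1 ∈ Icc (i.1.1 / 4) i.1.1 := by
  refine eventually_testPoints.2 ?_
  filter_upwards [eventually_mem_testScales] with q ⟨hσ, _, hmax⟩ p hp
  obtain ⟨hσδ, hεδ⟩ := max_le_iff.1 hmax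
  exact ⟨by linarith [hp.1.2], by linarith [hp.1.1]⟩

theorem eventually_fst_pos_testPoints : ∀ᶠ i in testPoints, 0 < i.1.1 :=
  (tendsto_fst_testScales.comp tendsto_fst_testPoints).eventually self_mem_nhdsWithin

theorem half_sub_isTheta_testPoints :
    (fun i : (ℝ × ℝ × ℝ) × ℝ × ℝ => i.1.1 / 2 - i.2.1) =Θ[testPoints] fun i => i.1.1 := by
  refine ⟨.of_bound 1 ?_, .of_bound 4 ?_⟩ <;>
  · filter_upwards [eventually_half_sub_mem_Icc, eventually_fst_pos_testPoints] with i hi hδ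
    have hhalf : ‖i.1.1 / 2 - i.2.1‖ = i.1.1 / 2 - i.2.1 :=
      Real.norm_of_nonneg (by linarith [hi.1])
    rw [hhalf, Real.norm_of_nonneg hδ.le]
    linarith [hi.1, hi.2]

theorem tendsto_half_sub_testPoints :
    Tendsto (fun i : (ℝ × ℝ × ℝ) × ℝ × ℝ => i.1.1 / 2 - i.2.1) testPoints (𝓝[>] 0) := by
  have hδ : Tendsto (fun i : (ℝ × ℝ × ℝ) × ℝ × ℝ => i.1.1) testPoints (𝓝 0) :=
    (tendsto_fst_testScales.comp tendsto_fst_testPoints).mono_right nhdsWithin_le_nhds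
  refine tendsto_nhdsWithin_iff.2 ⟨half_sub_isTheta_testPoints.1.trans_tendsto hδ, ?_⟩
  filter_upwards [eventually_half_sub_mem_Icc, eventually_fst_pos_testPoints] with i hi hδ_pos
  exact (div_pos hδ_pos four_pos).trans_le hi.1

theorem equalAreaChart_reflected_chord_isBigO (hγ : ContDiff ℝ 4 γ) (hunit : ∀ t, ‖deriv γ t‖ = 1) :
    ((fun i : (ℝ × ℝ × ℝ) × ℝ × ℝ => ⟪equalAreaChart γ i.1.2.1 (i.1.1 - i.2.1, i.2.2) -
        equalAreaChart γ i.1.2.1 i.2, deriv γ (i.1.1 / 2)⟫ -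
        chordModel (signedCurvature γ (i.1.1 / 2)) (i.1.1 / 2 - i.2.1)
          (areaHeight i.1.2.1 (-signedCurvature γ (i.1.1 / 2)) i.2.2))
      =O[testPoints] fun i => i.1.1 ^ 4) ∧
    (fun i : (ℝ × ℝ × ℝ) × ℝ × ℝ => ‖equalAreaChart γ i.1.2.1 (i.1.1 - i.2.1, i.2.2) -
        equalAreaChart γ i.1.2.1 i.2‖ -
        chordModel (signedCurvature γ (i.1.1 / 2)) (i.1.1 / 2 - i.2.1)
          (areaHeight i.1.2.1 (-signedCurvature γ (i.1.1 / 2)) i.2.2))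
      =O[testPoints] fun i => i.1.1 ^ 4 := by
  have hc : Tendsto (fun i : (ℝ × ℝ × ℝ) × ℝ × ℝ => i.1.1 / 2) testPoints (𝓝 0) := by
    simpa using ((tendsto_fst_testScales.comp tendsto_fst_testPoints).mono_right
      nhdsWithin_le_nhds).div_const 2
  have hσ : (fun i : (ℝ × ℝ × ℝ) × ℝ × ℝ => i.1.2.1) =O[testPoints] fun i => i.1.1 / 2 - i.2.1 :=
    (isBigO_fst_testScales.1.comp_tendsto tendsto_fst_testPoints).trans
      half_sub_isTheta_testPoints.2
  have hv : ∀ᶠ i in testPoints, i.2.2 ∈ Ioo (-i.1.2.1) i.1.2.1 :=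
    eventually_testPoints.2 (.of_forall fun q p hp => hp.2)
  have hchord := equalAreaChart_chord_isBigO hγ hunit hc tendsto_half_sub_testPoints hσ hv
  have hright : ∀ δ x : ℝ, δ / 2 + (δ / 2 - x) = δ - x := fun δ x => by ring
  simp only [hright, sub_sub_cancel] at hchord
  have hpow := half_sub_isTheta_testPoints.1.pow 4
  exact hchord.imp (·.trans hpow) (·.trans hpow)

theorem W1_equalAreaChart_sub_integral_isBigO (hγ : ContDiff ℝ 4 γ) (hunit : ∀ t, ‖deriv γ t‖ = 1) :
    (fun q => W1 ((normRestrict (testRectangle q)).map (equalAreaChart γ q.2.1))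
        ((normRestrict (testRectangle q)).map
          (equalAreaChart γ q.2.1 ∘ Prod.map (q.1 - ·) id)) -
      ∫ p, chordModel (signedCurvature γ (q.1 / 2)) (q.1 / 2 - p.1)
        (areaHeight q.2.1 (-signedCurvature γ (q.1 / 2)) p.2) ∂normRestrict (testRectangle q))
      =O[testScales] fun q => q.1 ^ 4 := by
  obtain ⟨hinner, hnorm⟩ := equalAreaChart_reflected_chord_isBigO hγ hunit
  obtain ⟨C, hC⟩ := (hinner.prod_left hnorm).bound
  refine .of_bound C ?_
  filter_upwards [eventually_testPoints.1 hC, eventually_mem_testScales]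
    with ⟨δ, σ, ε⟩ hchord ⟨hσ, hε, _⟩
  have hmem : ∀ᵐ p ∂normRestrict (testRectangle (δ, σ, ε)), p ∈ testRectangle (δ, σ, ε) :=
    ae_mem_normRestrict (measurableSet_Ioo.prod measurableSet_Ioo)
  have hvol₀ : volume (testRectangle (δ, σ, ε)) ≠ 0 := by
    simpa [testRectangle, Measure.volume_eq_prod] using ⟨hε, hσ⟩
  have hbdd : Bornology.IsBounded (testRectangle (δ, σ, ε)) :=
    (Metric.isBounded_Ioo _ _).prod (Metric.isBounded_Ioo _ _)
  have := isProbabilityMeasure_normRestrict hvol₀ hbdd.measure_lt_top.ne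
  have hf := continuous_equalAreaChart (hγ.of_le (by norm_num)) σ
  have hg : Continuous (equalAreaChart γ σ ∘ Prod.map (δ - ·) id) := hf.comp (by fun_prop)
  refine abs_W1_map_sub_integral_le hf.measurable hg.measurable
    (integrable_normRestrict hf hvol₀ hbdd) (integrable_normRestrict hg hvol₀ hbdd)
    (hunit (δ / 2)).le
    (integrable_normRestrict (by unfold chordModel areaHeight; fun_prop) hvol₀ hbdd)
    (hmem.mono fun p hp => ?_) (hmem.mono fun p hp => ?_)
  · have := neg_le_of_abs_le (norm_prod_le_iff.1 (hchord p hp)).1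
    simp only [Function.comp_apply, Prod.map, id]
    linarith
  · have := le_of_abs_le (norm_prod_le_iff.1 (hchord p hp)).2
    simp only [Function.comp_apply, Prod.map, id]
    linarith

theorem norm_sub_chordModel_half_isBigO (hγ : ContDiff ℝ 4 γ) (hunit : ∀ t, ‖deriv γ t‖ = 1) :
    (fun δ => ‖γ 0 - γ δ‖ - chordModel (signedCurvature γ (δ / 2)) (δ / 2) 0)
      =O[𝓝[>] 0] fun δ => δ ^ 4 := by
  have hhalf : Tendsto (fun δ : ℝ => δ / 2) (𝓝[>] 0) (𝓝[>] 0) :=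
    tendsto_nhdsWithin_iff.2 ⟨(Continuous.tendsto' (by fun_prop) _ _ (by simp)).mono_left
      nhdsWithin_le_nhds, eventually_mem_nhdsWithin.mono fun _ => half_pos (α := ℝ)⟩
  have hchord := norm_sub_sub_chordModel_isBigO hγ hunit (hhalf.mono_right nhdsWithin_le_nhds) hhalf
  simp only [add_halves, sub_self, div_pow] at hchord
  simp only [norm_sub_rev (γ 0)]
  exact hchord.trans <|
    (isBigO_const_mul_self _ _ _).congr_left fun δ => (div_eq_inv_mul _ _).symm

theorem norm_sub_sub_self_isBigO (hγ : ContDiff ℝ 4 γ) (hunit : ∀ t, ‖deriv γ t‖ = 1) :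
    (fun δ => ‖γ 0 - γ δ‖ - δ) =O[𝓝[>] 0] fun δ => δ ^ 2 := by
  have hδ : Tendsto (fun δ : ℝ => δ) (𝓝[>] 0) (𝓝 0) := nhdsWithin_le_nhds
  have hκ : (fun δ => signedCurvature γ (δ / 2)) =O[𝓝[>] 0] fun _ => (1 : ℝ) :=
    isBigO_one_of_continuous (continuous_signedCurvature (hγ.of_le (by norm_num)))
      (hδ.div_const 2)
  have hcubic : (fun δ => chordModel (signedCurvature γ (δ / 2)) (δ / 2) 0 - δ)
      =O[𝓝[>] 0] fun δ => δ ^ 3 :=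
    (((hκ.pow 2).mul (isBigO_refl (fun δ : ℝ => δ ^ 3) _)).const_mul_left (-1 / 24)).congr
      (fun δ => by rw [chordModel]; ring) fun δ => by ring
  exact (((norm_sub_chordModel_half_isBigO hγ hunit).trans
    (isBigO_pow_of_le hδ (by norm_num))).add
      (hcubic.trans (isBigO_pow_of_le hδ (by norm_num)))).congr_left fun δ => by ring

theorem signedCurvature_half_sq_sub_isBigO (hγ : ContDiff ℝ 3 γ) :
    (fun δ => signedCurvature γ (δ / 2) ^ 2 - signedCurvature γ 0 ^ 2)
      =O[𝓝[>] 0] fun δ => δ := by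
  have hκ := ((contDiff_signedCurvature (k := 1) hγ).pow 2).differentiable one_ne_zero
  have hcomp : DifferentiableAt ℝ (fun δ => signedCurvature γ (δ / 2) ^ 2) 0 :=
    DifferentiableAt.comp (0 : ℝ) (hκ _) (by fun_prop)
  simpa using hcomp.isBigO_sub.mono nhdsWithin_le_nhds

theorem W1_equalAreaChart_sub_mul_isBigO (hγ : ContDiff ℝ 4 γ) (hunit : ∀ t, ‖deriv γ t‖ = 1) :
    (fun q => W1 ((normRestrict (testRectangle q)).map (equalAreaChart γ q.2.1))
        ((normRestrict (testRectangle q)).map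
          (equalAreaChart γ q.2.1 ∘ Prod.map (q.1 - ·) id)) -
      ‖γ 0 - γ q.1‖ * (1 + signedCurvature γ 0 ^ 2 * (q.2.1 ^ 2 / 3 - q.2.2 ^ 2 / 6)))
      =O[testScales] fun q => q.1 ^ 4 := by
  have hscale : (fun q : ℝ × ℝ × ℝ => q.2.1 ^ 2 / 3 - q.2.2 ^ 2 / 6)
      =O[testScales] fun q => q.1 ^ 2 :=
    (((isBigO_fst_testScales.1.pow 2).const_mul_left (1 / 3)).sub
      ((isBigO_fst_testScales.2.pow 2).const_mul_left (1 / 6))).congr_left fun q => by ring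
  have hcurv : (fun δ => signedCurvature γ (δ / 2) ^ 2 * δ - ‖γ 0 - γ δ‖ * signedCurvature γ 0 ^ 2)
      =O[𝓝[>] 0] fun δ => δ ^ 2 :=
    (((signedCurvature_half_sq_sub_isBigO (hγ.of_le (by norm_num))).mul
      (isBigO_refl (fun δ : ℝ => δ) _)).congr_right fun δ => (sq δ).symm).sub
        ((norm_sub_sub_self_isBigO hγ hunit).const_mul_left (signedCurvature γ 0 ^ 2))
          |>.congr_left fun δ => by ring
  refine (((W1_equalAreaChart_sub_integral_isBigO hγ hunit).sub
    ((norm_sub_chordModel_half_isBigO hγ hunit).comp_tendsto tendsto_fst_testScales)).add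
      ((hscale.mul (hcurv.comp_tendsto tendsto_fst_testScales)).congr_right fun q => ?_)).congr' ?_
        .rfl
  · simp only [Function.comp_apply]
    ring
  · filter_upwards [eventually_mem_testScales] with q ⟨hσ, hε, _⟩
    rw [testRectangle, integral_chordModel_normRestrict _ _ hσ hε]
    simp only [Function.comp_apply]
    ring

end Expansion

theorem planar_curve_wasserstein_expansion_general {γ : ℝ → ℝ²} (hγ : ContDiff ℝ 4 γ)
    (hunit : ∀ t, ‖deriv γ t‖ = 1) {n : ℝ → ℝ²}
    (hn : ∀ᶠ a in 𝓝 0, ‖n a‖ = 1 ∧ ⟪n a, deriv γ a⟫ = 0) {μ : ℝ → ℝ → ℝ → Measure ℝ²}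
    (hμ : ∀ t σ ε, μ t σ ε = normRestrict ((fun p : ℝ × ℝ => γ p.1 + p.2 • n p.1) ''
      (Ioo (t - ε) (t + ε) ×ˢ Ioo (-σ) σ))) :
    ∃ C > 0, ∃ δ₁ > 0, ∀ δ ∈ Ioc 0 δ₁, ∀ σ ε : ℝ, 0 < σ → 0 < ε → max σ ε ≤ δ / 4 →
      |W1 (μ 0 σ ε) (μ δ σ ε) -
        ‖γ 0 - γ δ‖ * (1 + ‖deriv (deriv γ) 0‖ ^ 2 * (σ ^ 2 / 3 - ε ^ 2 / 6))| ≤ C * δ ^ 4 := by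
  have hγ' : ContDiff ℝ 3 (deriv γ) := hγ.deriv'
  obtain ⟨C, hC, hbound⟩ := (W1_equalAreaChart_sub_mul_isBigO hγ hunit).exists_pos
  obtain ⟨δ₁, hδ₁, h⟩ := eventually_testScales.1 <| hbound.bound.and <|
    eventually_W1_normRestrict_image_eq (hγ.of_le (by norm_num)) hunit hn hμ
  refine ⟨C, hC, δ₁, hδ₁, fun δ hδ σ ε hσ hε hmax => ?_⟩
  obtain ⟨hle, hW⟩ := h δ hδ σ ε hσ hε hmax
  rwa [← hW, Real.norm_eq_abs, Real.norm_of_nonneg (pow_nonneg hδ.1.le 4),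
    ← sq_abs (signedCurvature γ 0),
    abs_signedCurvature (hγ'.differentiable (by norm_num) 0) hunit] at hle

/-- Coarse extrinsic curvature expansion for a planar curve:
`W₁(μ_{x₀}^{σ,ε}, μ_y^{σ,ε}) = ‖x₀ − y‖ (1 − ε²/(6R²) + σ²/(3R²)) + O(δ⁴)`. -/
theorem planar_curve_wasserstein_expansion
    (δ₀ : ℝ) (hδ₀ : 0 < δ₀)
    (γ : ℝ → EuclideanSpace ℝ (Fin 2)) (hγ : ContDiff ℝ (⊤ : ℕ∞) γ)
    (hunit : ∀ α : ℝ, ‖deriv γ α‖ = 1)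
    (hcurv : ∀ α ∈ Icc (-δ₀) (2 * δ₀), deriv (deriv γ) α ≠ 0)
    (R : ℝ → ℝ) (hR : ∀ α : ℝ, R α = ‖deriv (deriv γ) α‖⁻¹)
    (n : ℝ → EuclideanSpace ℝ (Fin 2)) (hn : ∀ α : ℝ, n α = R α • deriv (deriv γ) α)
    (φ : ℝ × ℝ → EuclideanSpace ℝ (Fin 2)) (hφ : ∀ p : ℝ × ℝ, φ p = γ p.1 + p.2 • n p.1)
    (hinj : InjOn φ (Icc (-δ₀) (2 * δ₀) ×ˢ Icc (-δ₀) δ₀))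
    (hreach : ∀ α ∈ Icc (-δ₀) (2 * δ₀), δ₀ < R α)
    (μ : ℝ → ℝ → ℝ → Measure (EuclideanSpace ℝ (Fin 2)))
    (hμ : ∀ t σ ε : ℝ, μ t σ ε = normRestrict (φ '' (Ioo (t - ε) (t + ε) ×ˢ Ioo (-σ) σ))) :
    ∃ C > (0:ℝ), ∃ δ₁ ∈ Ioc (0:ℝ) δ₀, ∀ δ ∈ Ioc (0:ℝ) δ₁, ∀ σ ε : ℝ,
      0 < σ → 0 < ε → max σ ε ≤ δ / 4 →
      |W1 (μ 0 σ ε) (μ δ σ ε) -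
        ‖γ 0 - γ δ‖ * (1 - ε ^ 2 / (6 * R 0 ^ 2) + σ ^ 2 / (3 * R 0 ^ 2))| ≤ C * δ ^ 4 := by
  have hγ' : ContDiff ℝ (⊤ : ℕ∞) (deriv γ) := hγ.deriv'
  have hnormal : ∀ᶠ α in 𝓝 0, ‖n α‖ = 1 ∧ ⟪n α, deriv γ α⟫ = 0 := by
    filter_upwards [Icc_mem_nhds (neg_neg_of_pos hδ₀) (by linarith : 0 < 2 * δ₀)] with α hα
    rw [hn, hR]
    exact unit_normal_of_deriv_deriv_ne_zero (hγ'.differentiable (by norm_num) α) hunit (hcurv α hα)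
  obtain ⟨C, hC, δ₁, hδ₁, h⟩ := planar_curve_wasserstein_expansion_general
    (hγ.of_le (WithTop.coe_le_coe.2 le_top)) hunit hnormal (μ := μ)
    fun t σ ε => by rw [hμ, funext hφ]
  refine ⟨C, hC, min δ₁ δ₀, ⟨lt_min hδ₁ hδ₀, min_le_right _ _⟩, fun δ hδ σ ε hσ hε hmax => ?_⟩
  convert h δ ⟨hδ.1, hδ.2.trans (min_le_left _ _)⟩ σ ε hσ hε hmax using 4
  rw [hR]
  field_simp
  ring
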